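/- For T, S ∈ ST(λ_b), let w_{T,S} be a permutation of {1,…,N} with T = w_{T,S}·S (acting on tableaux through positions of the residue sequence, as in the τ-action), and set c_{T,S} := e(res(T)) τ_{w_{T,S}} e(res(S)) ∈ R^{Λ₁}(ξ). Then c_{T,S} does not depend on the choice of reduced expression of w_{T,S}, and the set {c_{T,S} : T, S ∈ ST(λ_b)} is a k-basis of R^{Λ₁}(ξ); in particular dim_k R^{Λ₁}(ξ) = |ST(λ_b)|². -/

import Mathlib

open scoped Classical

namespace QHA

variable (k : Type) [Field k]

/-- Generators of the quiver Hecke algebra `R(β)` on `m` strands with vertex set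
`Fin n`: the idempotents `e(ν)`, the polynomial generators `x_p` and the
intertwiners `τ_j` (acting on strands `j`, `j+1`, 0-based). -/
inductive Gen (n m : ℕ) : Type
  | e (ν : Fin m → Fin n) : Gen n m
  | x (p : Fin m) : Gen n m
  | t (j : ℕ) (h : j + 1 < m) : Gen n m

/-- The free algebra on the generators. -/
abbrev FA (n m : ℕ) := FreeAlgebra k (Gen n m)

variable {n m : ℕ}

noncomputable def Eg (ν : Fin m → Fin n) : FA k n m := FreeAlgebra.ι k (Gen.e ν)
noncomputable def Xg (p : Fin m) : FA k n m := FreeAlgebra.ι k (Gen.x p)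
noncomputable def Tg (j : ℕ) (h : j + 1 < m) : FA k n m := FreeAlgebra.ι k (Gen.t j h)

/-- The transposition of the strands `j`, `j+1` (0-based). -/
def posSwap (j : ℕ) (h : j + 1 < m) : Equiv.Perm (Fin m) :=
  Equiv.swap ⟨j, Nat.lt_of_succ_lt h⟩ ⟨j + 1, h⟩

/-- The place-permutation `s_j ν` of a sequence `ν`. -/
def swapSeq (j : ℕ) (h : j + 1 < m) (ν : Fin m → Fin n) : Fin m → Fin n :=
  ν ∘ posSwap j h

/-- Evaluation of a two-variable polynomial `p(u,v)` at two elements of a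
(possibly noncommutative) `k`-algebra, as `Σ t_{p,q} a^p b^q`. -/
noncomputable def eval2 {A : Type} [Ring A] [Algebra k A]
    (p : MvPolynomial (Fin 2) k) (a b : A) : A :=
  ∑ d ∈ p.support, algebraMap k A (MvPolynomial.coeff d p) * (a ^ d 0 * b ^ d 1)

/-- Evaluation of a three-variable polynomial. -/
noncomputable def eval3 {A : Type} [Ring A] [Algebra k A]
    (p : MvPolynomial (Fin 3) k) (a b c : A) : A :=
  ∑ d ∈ p.support, algebraMap k A (MvPolynomial.coeff d p) * (a ^ d 0 * b ^ d 1 * c ^ d 2)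

/-- For `p = Q(u,v)`, the polynomial `(Q(u,v) - Q(w,v))/(u - w)` in the three
variables `u = X 0`, `v = X 1`, `w = X 2` (exact division by the monic `u - w`). -/
noncomputable def Qbar (p : MvPolynomial (Fin 2) k) : MvPolynomial (Fin 3) k :=
  (MvPolynomial.finSuccEquiv k 2).symm
    (Polynomial.divByMonic
      ((MvPolynomial.finSuccEquiv k 2)
        (MvPolynomial.rename (fun i : Fin 2 => if i = 0 then (0 : Fin 3) else 1) p -
          MvPolynomial.rename (fun i : Fin 2 => if i = 0 then (2 : Fin 3) else 1) p))
      (Polynomial.X - Polynomial.C (MvPolynomial.X 1)))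

/-- Admissibility of the family `Q_{i,j}(u,v)` of polynomials with respect to the
(symmetrizable) Cartan matrix `A` and symmetrizing integers `d`
(so `(α_i, α_j) = d_i A_{i j}`):
`Q_{i,i} = 0`; `Q_{j,i}(u,v) = Q_{i,j}(v,u)`; `Q_{i,j} = 1` whenever `(α_i,α_j) = 0`
(`i ≠ j`); `Q_{i,j}` is supported on `(p,q)` with
`(α_i,α_i) p + (α_j,α_j) q = -2(α_i,α_j)`; and `t_{i,j;-a_{ij},0} ≠ 0`. -/
def QAdmissible (A : Fin n → Fin n → ℤ) (d : Fin n → ℤ)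
    (Q : Fin n → Fin n → MvPolynomial (Fin 2) k) : Prop :=
  (∀ i, Q i i = 0) ∧
  (∀ i j, Q j i = MvPolynomial.rename (Equiv.swap (0 : Fin 2) 1) (Q i j)) ∧
  (∀ i j, i ≠ j → d i * A i j = 0 → Q i j = 1) ∧
  (∀ i j, i ≠ j → ∀ dd ∈ (Q i j).support,
    (2 * d i) * (dd 0 : ℤ) + (2 * d j) * (dd 1 : ℤ) = -2 * (d i * A i j)) ∧
  (∀ i j, i ≠ j →
    MvPolynomial.coeff (Finsupp.single (0 : Fin 2) (-(A i j)).toNat) (Q i j) ≠ 0)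

/-- The defining relations of the quiver Hecke algebra `R(β)`, where
`S ⊆ I^m` is the set of admissible sequences (`I^β`; `e(ν) = 0` for `ν ∉ S`). -/
inductive Rel (Q : Fin n → Fin n → MvPolynomial (Fin 2) k) (S : Set (Fin m → Fin n)) :
    FA k n m → FA k n m → Prop
  | e_orth (ν ν' : Fin m → Fin n) (hne : ν ≠ ν') : Rel Q S (Eg k ν * Eg k ν') 0
  | e_idem (ν : Fin m → Fin n) : Rel Q S (Eg k ν * Eg k ν) (Eg k ν)
  | e_sum : Rel Q S (∑ ν : Fin m → Fin n, Eg k ν) 1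
  | e_out (ν : Fin m → Fin n) (hν : ν ∉ S) : Rel Q S (Eg k ν) 0
  | xx (p q : Fin m) : Rel Q S (Xg k p * Xg k q) (Xg k q * Xg k p)
  | xe (p : Fin m) (ν : Fin m → Fin n) : Rel Q S (Xg k p * Eg k ν) (Eg k ν * Xg k p)
  | te (j : ℕ) (h : j + 1 < m) (ν : Fin m → Fin n) :
      Rel Q S (Tg k j h * Eg k ν) (Eg k (swapSeq j h ν) * Tg k j h)
  | tt (a : ℕ) (ha : a + 1 < m) (b : ℕ) (hb : b + 1 < m) (hab : a + 1 < b ∨ b + 1 < a) :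
      Rel Q S (Tg k a ha * Tg k b hb) (Tg k b hb * Tg k a ha)
  | tsq (j : ℕ) (h : j + 1 < m) (ν : Fin m → Fin n) :
      Rel Q S (Tg k j h * Tg k j h * Eg k ν)
        (eval2 k (Q (ν ⟨j, Nat.lt_of_succ_lt h⟩) (ν ⟨j + 1, h⟩))
          (Xg k ⟨j, Nat.lt_of_succ_lt h⟩) (Xg k ⟨j + 1, h⟩) * Eg k ν)
  | tx_left (j : ℕ) (h : j + 1 < m) (ν : Fin m → Fin n)
      (hv : ν ⟨j, Nat.lt_of_succ_lt h⟩ = ν ⟨j + 1, h⟩) :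
      Rel Q S (Tg k j h * Xg k ⟨j, Nat.lt_of_succ_lt h⟩ * Eg k ν)
        (Xg k ⟨j + 1, h⟩ * Tg k j h * Eg k ν - Eg k ν)
  | tx_right (j : ℕ) (h : j + 1 < m) (ν : Fin m → Fin n)
      (hv : ν ⟨j, Nat.lt_of_succ_lt h⟩ = ν ⟨j + 1, h⟩) :
      Rel Q S (Tg k j h * Xg k ⟨j + 1, h⟩ * Eg k ν)
        (Xg k ⟨j, Nat.lt_of_succ_lt h⟩ * Tg k j h * Eg k ν + Eg k ν)
  | tx_comm (j : ℕ) (h : j + 1 < m) (ν : Fin m → Fin n) (p : Fin m)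
      (hcase : ν ⟨j, Nat.lt_of_succ_lt h⟩ ≠ ν ⟨j + 1, h⟩ ∨ ((p : ℕ) ≠ j ∧ (p : ℕ) ≠ j + 1)) :
      Rel Q S (Tg k j h * Xg k p * Eg k ν) (Xg k (posSwap j h p) * Tg k j h * Eg k ν)
  | braid_ne (j : ℕ) (h1 : j + 1 < m) (h2 : j + 2 < m) (ν : Fin m → Fin n)
      (hv : ν ⟨j, by omega⟩ ≠ ν ⟨j + 2, h2⟩) :
      Rel Q S
        (Tg k (j + 1) (by omega) * Tg k j h1 * Tg k (j + 1) (by omega) * Eg k ν)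
        (Tg k j h1 * Tg k (j + 1) (by omega) * Tg k j h1 * Eg k ν)
  | braid_eq (j : ℕ) (h1 : j + 1 < m) (h2 : j + 2 < m) (ν : Fin m → Fin n)
      (hv : ν ⟨j, by omega⟩ = ν ⟨j + 2, h2⟩) :
      Rel Q S
        (Tg k (j + 1) (by omega) * Tg k j h1 * Tg k (j + 1) (by omega) * Eg k ν)
        (Tg k j h1 * Tg k (j + 1) (by omega) * Tg k j h1 * Eg k ν +
          eval3 k (Qbar k (Q (ν ⟨j, by omega⟩) (ν ⟨j + 1, h1⟩)))
            (Xg k ⟨j, by omega⟩) (Xg k ⟨j + 1, h1⟩) (Xg k ⟨j + 2, h2⟩) * Eg k ν)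

/-- The extra cyclotomic relations `x_m^{⟨h_{ν_m}, Λ⟩} e(ν) = 0` (`ν ∈ I^β`),
where `Λ` is written in fundamental-weight coordinates, so `⟨h_i, Λ⟩ = Λ i`. -/
inductive CycRel (Λ : Fin n → ℤ) (S : Set (Fin m → Fin n)) :
    FA k n m → FA k n m → Prop
  | cyc (ν : Fin m → Fin n) (hν : ν ∈ S) (p : Fin m) (hp : (p : ℕ) + 1 = m) :
      CycRel Λ S (Xg k p ^ (Λ (ν p)).toNat * Eg k ν) 0

/-- Relations of the cyclotomic quiver Hecke algebra `R^Λ(β)`. -/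
def CRel (Q : Fin n → Fin n → MvPolynomial (Fin 2) k) (S : Set (Fin m → Fin n))
    (Λ : Fin n → ℤ) : FA k n m → FA k n m → Prop :=
  fun a b => Rel k Q S a b ∨ CycRel k Λ S a b

/-- The `j`-th column of the Cartan matrix: the simple root `α_j` written in
fundamental-weight coordinates (`⟨h_i, α_j⟩ = A i j`). -/
def αcol (A : Fin n → Fin n → ℤ) (j : Fin n) : Fin n → ℤ := fun i => A i j

/-- `FPath A Λ [i₁, …, i_ℓ] ξ` means `f̃_{i₁} ⋯ f̃_{i_ℓ} Λ = ξ` in the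
minuscule crystal realized on the Weyl orbit of `Λ`:
`f̃_j μ = μ - α_j` whenever `⟨h_j, μ⟩ = 1` (and is undefined otherwise). -/
inductive FPath (A : Fin n → Fin n → ℤ) (Λ : Fin n → ℤ) :
    List (Fin n) → (Fin n → ℤ) → Prop
  | nil : FPath A Λ [] Λ
  | cons (j : Fin n) (l : List (Fin n)) (ξ : Fin n → ℤ) :
      FPath A Λ l ξ → ξ j = 1 → FPath A Λ (j :: l) (ξ - αcol A j)

/-- The simple reflection `s_j μ = μ - ⟨h_j, μ⟩ α_j` on the weight lattice. -/
def sRef (A : Fin n → Fin n → ℤ) (j : Fin n) (μ : Fin n → ℤ) : Fin n → ℤ :=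
  fun i => μ i - μ j * A i j

/-- The Weyl group orbit of `Λ` (the Weyl group being generated by the
involutions `s_j`, its orbit consists of images under words in the `s_j`). -/
def orbitW (A : Fin n → Fin n → ℤ) (Λ : Fin n → ℤ) : Set (Fin n → ℤ) :=
  {ξ | ∃ l : List (Fin n), l.foldr (sRef A) Λ = ξ}

end QHA

namespace QHA

variable (k : Type) [Field k]

/-- The Cartan matrix of type `Bₙ` (0-based labeling; the first node carries the
short simple root: `a_{1,2} = -2`, `a_{2,1} = -1` in 1-based labels, and
`1 — 2 — ⋯ — n` is a chain). -/
def AB (n : ℕ) : Fin n → Fin n → ℤ := fun i j =>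
  if i = j then 2
  else if (i : ℕ) = 0 ∧ (j : ℕ) = 1 then -2
  else if (i : ℕ) + 1 = (j : ℕ) ∨ (j : ℕ) + 1 = (i : ℕ) then -1
  else 0

/-- The symmetrizing integers of type `Bₙ`: `d₁ = 1` and `d_i = 2` for `i ≥ 2`. -/
def dB (n : ℕ) : Fin n → ℤ := fun i => if (i : ℕ) = 0 then 1 else 2

/-- The shifted Young diagram of a strict partition `l = (λ₁ > λ₂ > ⋯)`,
as the set of (1-based) boxes `(i,j)` with `1 ≤ i ≤ ℓ`, `i ≤ j ≤ λᵢ + i - 1`. -/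
def diagram (l : List ℕ) : Set (ℕ × ℕ) :=
  {b | b.1 - 1 < l.length ∧ 1 ≤ b.1 ∧ b.1 ≤ b.2 ∧ b.2 + 1 ≤ l.getD (b.1 - 1) 0 + b.1}

/-- The shifted Young diagram as a finset. -/
def diagFinset (l : List ℕ) : Finset (ℕ × ℕ) :=
  (Finset.range l.length).biUnion fun i =>
    (Finset.Icc (i + 1) (l.getD i 0 + i)).image fun j => (i + 1, j)

/-- The residue `res(i,j) = j - i + 1` of a box. -/
def resBox (b : ℕ × ℕ) : ℕ := b.2 + 1 - b.1

/-- The residue of a box as an element of `I = Fin n` (`0`-based: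
the box `(i,j)` has `0`-based residue `j - i`). -/
def resFin (n : ℕ) (hn : 0 < n) (b : ℕ × ℕ) : Fin n :=
  ⟨min (b.2 - b.1) (n - 1), by omega⟩

/-- `f : Fin N → ℕ × ℕ` is a standard tableau of shifted shape `l`, where `f k` is
the box containing the entry `k+1`. -/
def IsSYT (l : List ℕ) (N : ℕ) (f : Fin N → ℕ × ℕ) : Prop :=
  Function.Injective f ∧ Set.range f = diagram l ∧
    (∀ a b : Fin N, (f a).1 = (f b).1 → (f a).2 < (f b).2 → a < b) ∧
    (∀ a b : Fin N, (f a).2 = (f b).2 → (f a).1 < (f b).1 → a < b)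

/-- The residue sequence `res(T) = (res(b_N), …, res(b₁)) ∈ I^N` of a tableau. -/
def resSeq (n : ℕ) (hn : 0 < n) {N : ℕ} (f : Fin N → ℕ × ℕ) : Fin N → Fin n :=
  fun p => resFin n hn (f p.rev)

/-- The weight `wt(λ) = Λ₁ - Σ_{b ∈ λ} α_{res(b)}`, in fundamental-weight
coordinates, of type `Bₙ`. -/
noncomputable def wtP (n : ℕ) (hn : 0 < n) (l : List ℕ) : Fin n → ℤ :=
  Pi.single ⟨0, hn⟩ 1 - ∑ b ∈ diagFinset l, αcol (AB n) (resFin n hn b)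

/-- Exchanging in `T` the entries occupying positions `j`, `j+1` of the residue
sequence, i.e. the entries `N-j` and `N-j-1`. -/
def swapEnt {N : ℕ} (j : ℕ) (h : j + 1 < N) (f : Fin N → ℕ × ℕ) : Fin N → ℕ × ℕ :=
  f ∘ Equiv.swap (Fin.rev ⟨j, Nat.lt_of_succ_lt h⟩) (Fin.rev ⟨j + 1, h⟩)

section Ops

variable {N : ℕ} (n : ℕ) (hn : 0 < n) (P : (Fin N → ℕ × ℕ) → Prop)

/-- The vector space with basis the tableaux satisfying `P`. -/
abbrev TabV : Type := {f : Fin N → ℕ × ℕ // P f} → k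

/-- The prescribed action of `e(μ)`: projection onto the span of the tableaux
with residue sequence `μ`. -/
noncomputable def eOpTab (μ : Fin N → Fin n) : Module.End k (TabV k P) :=
  LinearMap.pi fun T => if resSeq n hn T.val = μ then LinearMap.proj T else 0

/-- The prescribed action of `τ_j`: `T ↦ s_j T` if `s_j T` still satisfies `P`,
and `0` otherwise. -/
noncomputable def tOpTab (j : ℕ) (h : j + 1 < N) : Module.End k (TabV k P) :=
  LinearMap.pi fun T =>
    if hh : P (swapEnt j h T.val) then
      LinearMap.proj (⟨swapEnt j h T.val, hh⟩ : {f : Fin N → ℕ × ℕ // P f}) else 0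

end Ops

section
variable {n : ℕ} (A : Fin n → Fin n → ℤ) (Λ ξ : Fin n → ℤ) (ℓ : ℕ)

/-- `I^β` for `β = Λ - ξ`. -/
def Iβ : Set (Fin ℓ → Fin n) :=
  {ν | ∑ p : Fin ℓ, αcol A (ν p) = fun i => Λ i - ξ i}
end

end QHA

namespace QHA

section Words

variable (k : Type) [Field k] {n : ℕ} (N : ℕ)

/-- Words in the adjacent transpositions of the symmetric group `S_N`. -/
abbrev Word : Type := List {j : ℕ // j + 1 < N}

/-- The permutation given by a word. -/
def wordProd (w : Word N) : Equiv.Perm (Fin N) :=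
  (w.map fun j => posSwap j.1 j.2).prod

/-- The Coxeter length of a permutation with respect to adjacent transpositions. -/
noncomputable def permLength (σ : Equiv.Perm (Fin N)) : ℕ :=
  sInf {r | ∃ w : Word N, wordProd N w = σ ∧ w.length = r}

/-- `w` is a reduced word for `σ`. -/
def IsReducedWord (σ : Equiv.Perm (Fin N)) (w : Word N) : Prop :=
  wordProd N w = σ ∧ w.length = permLength N σ

/-- `τ_w` for a word `w`. -/
noncomputable def tauWord (w : Word N) : FA k n N :=
  (w.map fun j => Tg k j.1 j.2).prod

end Words

/-- `T = σ · S`, where the permutation `σ` acts on tableaux through the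
positions of the residue sequence (position `p` of `res(T)` is occupied by the
entry `N - p`). -/
def permTab {N : ℕ} (σ : Equiv.Perm (Fin N)) (T S : Fin N → ℕ × ℕ) : Prop :=
  ∀ q : Fin N, S q = T (Fin.rev (σ (Fin.rev q)))

/-!
In `R^{Λ₁}(ξ)`, descending induction on the position `s` shows that `e(ν)` vanishes unless, for
every position `p ≥ s`, the letter `ν_p` can be added to the shape built from the letters to its
right, and that `x_p e(ν) = 0`: a letter that cannot be added is moved to the right by intertwiners
until it meets an equal letter or the end of the word. The surviving `ν` are the residue sequences
of standard tableaux, and as all the `x_p` vanish, `τ_j² e(ν)` is `e(ν)` or `0` according to whether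
`ν_j` and `ν_{j+1}` commute, and the `τ_j` satisfy the braid relations without correction terms.

Hence a product `e(ν) τ_w` depends only on the permutation of `w` as long as it does not vanish:
both words can be rewritten into the same normal form. So the nonzero `e(res(T)) τ_w` form a set
with at most one element for each pair of standard tableaux, and it spans the algebra. Conversely,
`τ_j ↦ s_j` defines a representation on the span of the standard tableaux, because the relations
above hold there: passing from `T` to `S` along a reduced word, all intermediate tableaux are
standard. It maps `c_{T,S}` to the matrix unit at `(T, S)`, so the `c_{T,S}` are linearly
independent.
-/

section Inversions

variable {N : ℕ}

theorem posSwap_mul_self (j : ℕ) (h : j + 1 < N) : posSwap j h * posSwap j h = 1 :=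
  Equiv.swap_mul_self _ _

theorem posSwap_inv (j : ℕ) (h : j + 1 < N) : (posSwap j h)⁻¹ = posSwap j h :=
  Equiv.swap_inv _ _

theorem val_posSwap (j : ℕ) (h : j + 1 < N) (p : Fin N) :
    (posSwap j h p : ℕ) =
      if (p : ℕ) = j then j + 1 else if (p : ℕ) = j + 1 then j else p := by
  simp only [posSwap, Equiv.swap_apply_def, Fin.ext_iff]
  split_ifs <;> rfl

theorem posSwap_lt_posSwap_iff {j : ℕ} {h : j + 1 < N} {p q : Fin N}
    (hpq : ¬((p : ℕ) = j ∧ (q : ℕ) = j + 1)) (hqp : ¬((p : ℕ) = j + 1 ∧ (q : ℕ) = j)) :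
    posSwap j h p < posSwap j h q ↔ p < q := by
  rw [Fin.lt_def, Fin.lt_def, val_posSwap, val_posSwap]
  split_ifs <;> omega

/-- The number of inversions of a permutation of `Fin N`; it is the combinatorial form of
`permLength`, see `permLength_eq_inversionCount`. -/
def inversionCount (σ : Equiv.Perm (Fin N)) : ℕ :=
  (Finset.univ.filter fun pq : Fin N × Fin N => pq.1 < pq.2 ∧ σ pq.2 < σ pq.1).card

/-- `j` is a (left) descent of `σ`: the value `j + 1` occurs before the value `j`. -/
def IsDescent (σ : Equiv.Perm (Fin N)) (j : ℕ) (h : j + 1 < N) : Prop :=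
  σ⁻¹ ⟨j + 1, h⟩ < σ⁻¹ ⟨j, by omega⟩

theorem inversionCount_one : inversionCount (1 : Equiv.Perm (Fin N)) = 0 := by
  rw [inversionCount, Finset.card_eq_zero, Finset.filter_eq_empty_iff]
  rintro ⟨p, q⟩ - ⟨hlt, hgt⟩
  exact hlt.not_gt hgt

theorem isDescent_posSwap_mul_iff {σ : Equiv.Perm (Fin N)} {j : ℕ} {h : j + 1 < N} :
    IsDescent (posSwap j h * σ) j h ↔ ¬IsDescent σ j h := by
  have hne : σ⁻¹ ⟨j, by omega⟩ ≠ σ⁻¹ ⟨j + 1, h⟩ := by simp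
  rw [IsDescent, IsDescent, mul_inv_rev, posSwap_inv, not_lt]
  simp only [posSwap, Equiv.Perm.mul_apply, Equiv.swap_apply_left, Equiv.swap_apply_right]
  exact ⟨le_of_lt, fun hle => lt_of_le_of_ne hle hne⟩

theorem inversionCount_posSwap_mul {σ : Equiv.Perm (Fin N)} {j : ℕ} {h : j + 1 < N}
    (hσ : ¬IsDescent σ j h) : inversionCount (posSwap j h * σ) = inversionCount σ + 1 := by
  obtain ⟨b, hb⟩ := σ.surjective ⟨j, by omega⟩
  obtain ⟨c, hc⟩ := σ.surjective ⟨j + 1, h⟩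
  have hbc : b < c := by
    refine lt_of_le_of_ne ?_ fun hbc => by simp [← hbc, hb] at hc
    simpa [IsDescent, ← hb, ← hc] using hσ
  have hnot : (b, c) ∉ Finset.univ.filter
      fun pq : Fin N × Fin N => pq.1 < pq.2 ∧ σ pq.2 < σ pq.1 := by simp [hb, hc]
  rw [inversionCount, inversionCount, ← Finset.card_insert_of_notMem hnot]
  congr 1
  ext ⟨p, q⟩
  rw [Finset.mem_insert, Finset.mem_filter, Finset.mem_filter]
  simp only [Finset.mem_univ, true_and, Prod.mk.injEq, Equiv.Perm.mul_apply]
  by_cases hbcpq : p = b ∧ q = c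
  · simp [hbcpq, hb, hc, hbc, posSwap]
  by_cases hcbpq : p = c ∧ q = b
  · simp [hcbpq, hbc.not_gt, hbc.ne']
  have hval : ∀ {p : Fin N} {i : Fin N} {b : Fin N}, σ b = i → (σ p : ℕ) = i → p = b :=
    fun hb hp => σ.injective (Fin.ext (hp.trans (congrArg Fin.val hb.symm)))
  rw [posSwap_lt_posSwap_iff (fun hqp => hcbpq ⟨hval hc hqp.2, hval hb hqp.1⟩)
    fun hqp => hbcpq ⟨hval hb hqp.2, hval hc hqp.1⟩]
  simp [hbcpq]

theorem IsDescent.inversionCount_posSwap_mul {σ : Equiv.Perm (Fin N)} {j : ℕ} {h : j + 1 < N}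
    (hσ : IsDescent σ j h) : inversionCount (posSwap j h * σ) + 1 = inversionCount σ := by
  rw [← QHA.inversionCount_posSwap_mul (isDescent_posSwap_mul_iff.not.2 (not_not.2 hσ)),
    ← mul_assoc, posSwap_mul_self, one_mul]

theorem wordProd_cons (a : {j : ℕ // j + 1 < N}) (w : Word N) :
    wordProd N (a :: w) = posSwap a.1 a.2 * wordProd N w := rfl

theorem inversionCount_wordProd_le (w : Word N) : inversionCount (wordProd N w) ≤ w.length := by
  induction w with
  | nil => exact inversionCount_one.le
  | cons a w ih =>
    rw [wordProd_cons, List.length_cons]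
    by_cases hdesc : IsDescent (wordProd N w) a.1 a.2
    · have := hdesc.inversionCount_posSwap_mul
      omega
    · rw [inversionCount_posSwap_mul hdesc]
      omega

theorem exists_isDescent {σ : Equiv.Perm (Fin N)} (hσ : σ ≠ 1) :
    ∃ (j : ℕ) (h : j + 1 < N), IsDescent σ j h := by
  by_contra! hno
  refine hσ (inv_eq_one.1 (Equiv.ext fun i => ?_))
  have hmono : StrictMono (σ⁻¹ : Equiv.Perm (Fin N)) := by
    cases N with
    | zero => exact fun a => a.elim0
    | succ M =>
      refine Fin.strictMono_iff_lt_succ.2 fun i => lt_of_le_of_ne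
        (not_lt.1 (hno i (by omega))) fun hi => ?_
      simp [Fin.ext_iff] at hi
  exact le_antisymm (hmono.le_id i) (hmono.id_le i)

theorem exists_word_length_eq_inversionCount (σ : Equiv.Perm (Fin N)) :
    ∃ w : Word N, wordProd N w = σ ∧ w.length = inversionCount σ := by
  induction hd : inversionCount σ generalizing σ with
  | zero =>
    refine ⟨[], ?_, rfl⟩
    by_contra hσ
    obtain ⟨j, h, hdesc⟩ := exists_isDescent (Ne.symm hσ)
    have := hdesc.inversionCount_posSwap_mul
    omega
  | succ d ih =>
    obtain ⟨j, h, hdesc⟩ := exists_isDescent (σ := σ) fun hσ => by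
      simp [hσ, inversionCount_one] at hd
    have hlen := hdesc.inversionCount_posSwap_mul
    obtain ⟨w, hw, hwlen⟩ := ih (posSwap j h * σ) (by omega)
    refine ⟨⟨j, h⟩ :: w, ?_, by rw [List.length_cons, hwlen]⟩
    rw [wordProd_cons, hw, ← mul_assoc, posSwap_mul_self, one_mul]

theorem permLength_eq_inversionCount (σ : Equiv.Perm (Fin N)) :
    permLength N σ = inversionCount σ := by
  obtain ⟨w, hw, hlen⟩ := exists_word_length_eq_inversionCount σ
  refine le_antisymm (Nat.sInf_le ⟨w, hw, hlen⟩) (le_csInf ⟨_, w, hw, rfl⟩ ?_)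
  rintro r ⟨w', rfl, rfl⟩
  exact inversionCount_wordProd_le w'

theorem exists_isReducedWord (σ : Equiv.Perm (Fin N)) : ∃ w, IsReducedWord N σ w := by
  obtain ⟨w, hw, hlen⟩ := exists_word_length_eq_inversionCount σ
  exact ⟨w, hw, hlen.trans (permLength_eq_inversionCount σ).symm⟩

theorem isReducedWord_nil : IsReducedWord N 1 [] :=
  ⟨rfl, by rw [permLength_eq_inversionCount, inversionCount_one, List.length_nil]⟩

theorem isReducedWord_cons_iff {a : {j : ℕ // j + 1 < N}} {w : Word N} :
    IsReducedWord N (wordProd N (a :: w)) (a :: w) ↔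
      IsReducedWord N (wordProd N w) w ∧ IsDescent (wordProd N (a :: w)) a.1 a.2 := by
  have hle := inversionCount_wordProd_le w
  simp only [IsReducedWord, true_and, permLength_eq_inversionCount, List.length_cons]
  rw [wordProd_cons, isDescent_posSwap_mul_iff]
  by_cases hdesc : IsDescent (wordProd N w) a.1 a.2
  · have := hdesc.inversionCount_posSwap_mul
    simp only [hdesc, not_true, and_false, iff_false]
    omega
  · rw [inversionCount_posSwap_mul hdesc]
    simp [hdesc]

end Inversions

section NormalForms

/-- The relations of the braid monoid on infinitely many strands. They hold for the simple
transpositions of `ℕ` and for the intertwiners of a quiver Hecke algebra acting on tableaux, so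
that both kinds of products can be rewritten by the same lemmas. -/
structure IsBraidFamily {M : Type*} [Monoid M] (t : ℕ → M) : Prop where
  commute : ∀ {i j}, i + 1 < j → Commute (t i) (t j)
  braid : ∀ j, t (j + 1) * t j * t (j + 1) = t j * t (j + 1) * t j

/-- The decreasing word `[a + d - 1, …, a + 1, a]`. -/
def descendingRun (a : ℕ) : ℕ → List ℕ
  | 0 => []
  | d + 1 => descendingRun (a + 1) d ++ [a]

/-- The normal forms of the elements of the symmetric group on `m` letters: concatenations of
descending runs, of which the one numbered `i`, for `0 ≤ i < m`, is empty or starts at `i - 1`. -/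
inductive IsNormalForm : ℕ → List ℕ → Prop
  | nil : IsNormalForm 0 []
  | append_run {m : ℕ} {c : List ℕ} (a d : ℕ) (hc : IsNormalForm m c) (had : a + d = m) :
      IsNormalForm (m + 1) (c ++ descendingRun a d)

/-- A braid family which, relative to local units `e i` permuted by it, consists of partial
involutions: `t j * t j` is `0` or `1` on each `e i`. -/
structure IsPartialInvolutionFamily {A ι : Type*} [MonoidWithZero A] (t : ℕ → A) (e : ι → A) :
    Prop extends IsBraidFamily t where
  exchange : ∀ i j, ∃ i', e i * t j = t j * e i'
  mul_sq : ∀ i j, e i * (t j * t j) = 0 ∨ e i * (t j * t j) = e i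

namespace IsBraidFamily

variable {M : Type*} [Monoid M] {t : ℕ → M}

theorem commute_run (ht : IsBraidFamily t) {a j : ℕ} (hj : j + 1 < a) (d : ℕ) :
    Commute ((descendingRun a d).map t).prod (t j) := by
  induction d generalizing a with
  | zero => exact Commute.one_left _
  | succ d ih =>
    rw [descendingRun, List.map_append, List.prod_append, List.map_singleton, List.prod_singleton]
    exact (ih (by omega)).mul_left (ht.commute hj).symm

theorem run_mul (ht : IsBraidFamily t) {a d j : ℕ} (haj : a ≤ j) (hjd : j + 1 < a + d) :
    ((descendingRun a d).map t).prod * t (j + 1) =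
      t j * ((descendingRun a d).map t).prod := by
  induction d generalizing a with
  | zero => omega
  | succ d ih =>
    rcases haj.eq_or_lt with rfl | haj
    · obtain ⟨d, rfl⟩ : ∃ d', d = d' + 1 := ⟨d - 1, by omega⟩
      simp only [descendingRun, List.map_append, List.prod_append, List.map_singleton,
        List.prod_singleton, mul_assoc]
      rw [← mul_assoc (t _), ht.braid, mul_assoc, ← mul_assoc, (ht.commute_run (by omega) d).eq,
        mul_assoc]
    · rw [descendingRun, List.map_append, List.prod_append, List.map_singleton,
        List.prod_singleton, mul_assoc, (ht.commute (by omega)).eq, ← mul_assoc,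
        ih haj (by omega), mul_assoc]

end IsBraidFamily

section Rewriting

variable {G A ι : Type*} [Monoid G] [MonoidWithZero A] {s : ℕ → G} {t : ℕ → A} {e : ι → A}

theorem IsPartialInvolutionFamily.exists_mul_prod_eq (ht : IsPartialInvolutionFamily t e)
    (w : List ℕ) (i : ι) : ∃ i', e i * (w.map t).prod = (w.map t).prod * e i' := by
  induction w generalizing i with
  | nil => exact ⟨i, by simp⟩
  | cons j w ih =>
    obtain ⟨i₁, h₁⟩ := ht.exchange i j
    obtain ⟨i₂, h₂⟩ := ih i₁
    exact ⟨i₂, by rw [List.map_cons, List.prod_cons, ← mul_assoc, h₁, mul_assoc, h₂, mul_assoc]⟩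

theorem IsPartialInvolutionFamily.mul_prod_mul_sq (ht : IsPartialInvolutionFamily t e)
    (w : List ℕ) (i : ι) (j : ℕ) :
    e i * (w.map t).prod * (t j * t j) = 0 ∨
      e i * (w.map t).prod * (t j * t j) = e i * (w.map t).prod := by
  obtain ⟨i', hi'⟩ := ht.exists_mul_prod_eq w i
  rw [hi', mul_assoc]
  rcases ht.mul_sq i' j with h | h <;> simp [h]

/-- The word `w` can be replaced by `c`: they have the same product in `G`, and in `A` the product
of `w` either vanishes or agrees with that of `c` on each local unit. -/
def ReducesTo (s : ℕ → G) (t : ℕ → A) (e : ι → A) (w c : List ℕ) : Prop :=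
  (w.map s).prod = (c.map s).prod ∧
    ∀ i, e i * (w.map t).prod = 0 ∨ e i * (w.map t).prod = e i * (c.map t).prod

theorem ReducesTo.of_prod_eq {w c : List ℕ} (hs : (w.map s).prod = (c.map s).prod)
    (ht : (w.map t).prod = (c.map t).prod) : ReducesTo s t e w c :=
  ⟨hs, fun _ => .inr (by rw [ht])⟩

theorem ReducesTo.trans {u v w : List ℕ} (huv : ReducesTo s t e u v)
    (hvw : ReducesTo s t e v w) : ReducesTo s t e u w :=
  ⟨huv.1.trans hvw.1, fun i => (huv.2 i).elim .inl fun h => by rw [h]; exact hvw.2 i⟩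

theorem ReducesTo.append_right {w c : List ℕ} (h : ReducesTo s t e w c) (v : List ℕ) :
    ReducesTo s t e (w ++ v) (c ++ v) := by
  refine ⟨by simp [h.1], fun i => ?_⟩
  rcases h.2 i with h | h <;> simp [← mul_assoc, h]

theorem IsNormalForm.exists_reducesTo_append_letter (hs : IsBraidFamily s)
    (hs_sq : ∀ j, s j * s j = 1) (ht : IsPartialInvolutionFamily t e) {m j : ℕ} {c : List ℕ}
    (hc : IsNormalForm m c) (hj : j + 1 < m) :
    ∃ c', IsNormalForm m c' ∧ ReducesTo s t e (c ++ [j]) c' := by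
  induction hc generalizing j with
  | nil => omega
  | @append_run m c a d hc had ih =>
    -- If `j` moves through the last run, becoming `j'`, then the shorter normal form absorbs `j'`.
    have hslide : ∀ j', j' + 1 < m →
        ((descendingRun a d).map s).prod * s j = s j' * ((descendingRun a d).map s).prod →
        ((descendingRun a d).map t).prod * t j = t j' * ((descendingRun a d).map t).prod →
        ∃ c', IsNormalForm (m + 1) c' ∧ ReducesTo s t e (c ++ descendingRun a d ++ [j]) c' := by
      intro j' hj' hsj htj
      obtain ⟨c', hc', hred⟩ := ih hj'
      refine ⟨_, hc'.append_run a d had, .trans ?_ (hred.append_right (descendingRun a d))⟩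
      exact .of_prod_eq (by simp [hsj]) (by simp [htj])
    obtain hlt | rfl | rfl | hgt : j + 1 < a ∨ j + 1 = a ∨ j = a ∨ a < j := by omega
    · exact hslide j (by omega) (hs.commute_run hlt d).eq (ht.commute_run hlt d).eq
    · exact ⟨_, hc.append_run j (d + 1) (by omega),
        .of_prod_eq (by simp [descendingRun]) (by simp [descendingRun])⟩
    · obtain ⟨d, rfl⟩ : ∃ d', d = d' + 1 := ⟨d - 1, by omega⟩
      refine ⟨_, hc.append_run (j + 1) d (by omega), ?_, fun i => ?_⟩
      · simp [descendingRun, hs_sq]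
      · simpa [descendingRun, mul_assoc] using
          ht.mul_prod_mul_sq (c ++ descendingRun (j + 1) d) i j
    · obtain ⟨j, rfl⟩ : ∃ j', j = j' + 1 := ⟨j - 1, by omega⟩
      exact hslide j (by omega) (hs.run_mul (by omega) (by omega))
        (ht.run_mul (by omega) (by omega))

theorem exists_isNormalForm_reducesTo_nil (m : ℕ) :
    ∃ c, IsNormalForm m c ∧ ReducesTo s t e [] c := by
  induction m with
  | zero => exact ⟨[], .nil, .of_prod_eq rfl rfl⟩
  | succ m ih =>
    obtain ⟨c, hc, hred⟩ := ih
    exact ⟨_, hc.append_run m 0 rfl, by simpa [descendingRun] using hred⟩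

theorem exists_isNormalForm_reducesTo (hs : IsBraidFamily s) (hs_sq : ∀ j, s j * s j = 1)
    (ht : IsPartialInvolutionFamily t e) {m : ℕ} (w : List ℕ) (hw : ∀ j ∈ w, j + 1 < m) :
    ∃ c, IsNormalForm m c ∧ ReducesTo s t e w c := by
  induction w using List.reverseRecOn with
  | nil => exact exists_isNormalForm_reducesTo_nil m
  | append_singleton w j ih =>
    obtain ⟨c, hc, hwc⟩ := ih fun j hj => hw j (by simp [hj])
    obtain ⟨c', hc', hcc'⟩ :=
      hc.exists_reducesTo_append_letter hs hs_sq ht (hw j (by simp))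
    exact ⟨c', hc', (hwc.append_right [j]).trans hcc'⟩

end Rewriting

/-- The transposition of `j` and `j + 1` in the symmetric group of `ℕ`. -/
def natSwap (j : ℕ) : Equiv.Perm ℕ := Equiv.swap j (j + 1)

theorem natSwap_mul_self (j : ℕ) : natSwap j * natSwap j = 1 := Equiv.swap_mul_self _ _

theorem natSwap_apply (j i : ℕ) :
    natSwap j i = if i = j then j + 1 else if i = j + 1 then j else i :=
  Equiv.swap_apply_def _ _ _

theorem isBraidFamily_natSwap : IsBraidFamily natSwap where
  commute hij := Equiv.ext fun p => by
    simp only [Equiv.Perm.mul_apply, natSwap_apply]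
    split_ifs <;> omega
  braid j := Equiv.ext fun p => by
    simp only [Equiv.Perm.mul_apply, natSwap_apply]
    split_ifs <;> omega

theorem prod_natSwap_run_apply (a d : ℕ) : ((descendingRun a d).map natSwap).prod a = a + d := by
  induction d generalizing a with
  | zero => rfl
  | succ d ih =>
    simp only [descendingRun, List.map_append, List.prod_append, List.map_singleton,
      List.prod_singleton, Equiv.Perm.mul_apply, natSwap_apply, if_true, ih]
    omega

theorem prod_natSwap_run_apply_of_lt {a d i : ℕ} (hi : a + d < i) :
    ((descendingRun a d).map natSwap).prod i = i := by
  induction d generalizing a with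
  | zero => rfl
  | succ d ih =>
    have hswap : natSwap a i = i := by rw [natSwap_apply, if_neg (by omega), if_neg (by omega)]
    simp only [descendingRun, List.map_append, List.prod_append, List.map_singleton,
      List.prod_singleton, Equiv.Perm.mul_apply, hswap]
    exact ih (by omega)

theorem IsNormalForm.prod_natSwap_apply_of_le {m : ℕ} {c : List ℕ} (hc : IsNormalForm m c) :
    ∀ {i : ℕ}, m ≤ i → (c.map natSwap).prod i = i := by
  induction hc with
  | nil => exact fun _ => rfl
  | append_run a d _ had ih =>
    intro i hi
    rw [List.map_append, List.prod_append, Equiv.Perm.mul_apply,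
      prod_natSwap_run_apply_of_lt (by omega), ih (by omega)]

theorem IsNormalForm.eq_of_prod_natSwap_eq {m : ℕ} {c c' : List ℕ} (hc : IsNormalForm m c)
    (hc' : IsNormalForm m c') (h : (c.map natSwap).prod = (c'.map natSwap).prod) : c = c' := by
  induction hc generalizing c' with
  | nil => cases hc'; rfl
  | @append_run m c a d hc had ih =>
    obtain _ | @⟨_, c', a', d', hc', had'⟩ := hc'
    simp only [List.map_append, List.prod_append] at h
    have happly : ∀ {c : List ℕ} {a d : ℕ}, IsNormalForm m c → a + d = m →
        ((c.map natSwap).prod * ((descendingRun a d).map natSwap).prod) a = m := by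
      intro c a d hc had
      rw [Equiv.Perm.mul_apply, prod_natSwap_run_apply, had, hc.prod_natSwap_apply_of_le le_rfl]
    obtain rfl : a = a' := by
      refine ((c'.map natSwap).prod * ((descendingRun a' d').map natSwap).prod).injective ?_
      rw [happly hc' had', ← h, happly hc had]
    obtain rfl : d = d' := by omega
    rw [ih hc' (mul_right_cancel h)]

theorem IsPartialInvolutionFamily.mul_prod_eq_of_ne_zero {A ι : Type*} [MonoidWithZero A]
    {t : ℕ → A} {e : ι → A} (ht : IsPartialInvolutionFamily t e) {m : ℕ} {w w' : List ℕ}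
    (hw : ∀ j ∈ w, j + 1 < m) (hw' : ∀ j ∈ w', j + 1 < m)
    (hww' : (w.map natSwap).prod = (w'.map natSwap).prod) {i : ι}
    (h : e i * (w.map t).prod ≠ 0) (h' : e i * (w'.map t).prod ≠ 0) :
    e i * (w.map t).prod = e i * (w'.map t).prod := by
  obtain ⟨c, hc, hwc, htc⟩ :=
    exists_isNormalForm_reducesTo isBraidFamily_natSwap natSwap_mul_self ht w hw
  obtain ⟨c', hc', hwc', htc'⟩ :=
    exists_isNormalForm_reducesTo isBraidFamily_natSwap natSwap_mul_self ht w' hw'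
  rw [(htc i).resolve_left h, (htc' i).resolve_left h',
    hc.eq_of_prod_natSwap_eq hc' (by rw [← hwc, hww', hwc'])]

end NormalForms

section LetterCounts

variable {n N : ℕ}

/-- The number of positions `≥ s` of the sequence `ν` carrying the letter `i`. Reading `ν` from
right to left builds a shifted diagram box by box; `letterCount ν s i` is the length of its
`i`-th diagonal when the positions `≥ s` have been read. -/
def letterCount (ν : Fin N → Fin n) (s i : ℕ) : ℕ :=
  (Finset.univ.filter fun q : Fin N => s ≤ (q : ℕ) ∧ (ν q : ℕ) = i).card

/-- A shifted diagram with diagonals of lengths `c 0, c 1, …` has an addable box on the `i`-th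
diagonal. -/
def IsAddable (c : ℕ → ℕ) (i : ℕ) : Prop :=
  (i = 0 ∨ c (i - 1) = c i + 1) ∧ c (i + 1) = c i

/-- A shifted diagram with diagonals of lengths `c 0, c 1, …` has a removable box on the `i`-th
diagonal. -/
def IsRemovable (c : ℕ → ℕ) (i : ℕ) : Prop :=
  (i = 0 ∨ c (i - 1) = c i) ∧ c i = c (i + 1) + 1

/-- The letter of `ν` at position `p` adds a box to the diagram given by the later positions. -/
def IsAddableAt (ν : Fin N → Fin n) (p : Fin N) : Prop :=
  IsAddable (letterCount ν (p + 1)) (ν p)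

/-- Two letters joined by an edge of the Dynkin diagram. -/
def LettersAdjacent (i j : ℕ) : Prop := i + 1 = j ∨ j + 1 = i

/-- Two distinct letters not joined by an edge of the Dynkin diagram. -/
def LettersCommute (i j : ℕ) : Prop := i ≠ j ∧ ¬LettersAdjacent i j

theorem LettersAdjacent.symm {i j : ℕ} (h : LettersAdjacent i j) : LettersAdjacent j i :=
  Or.symm h

theorem LettersCommute.symm {i j : ℕ} (h : LettersCommute i j) : LettersCommute j i :=
  ⟨h.1.symm, fun hadj => h.2 hadj.symm⟩

theorem LettersAdjacent.not_isAddable {c : ℕ → ℕ} {i j : ℕ} (h : LettersAdjacent i j)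
    (hi : IsAddable c i) : ¬IsAddable c j := by
  rintro ⟨hj, hj'⟩
  obtain ⟨hi, hi'⟩ := hi
  rcases h with rfl | rfl
  · simp only [Nat.add_sub_cancel] at hj
    omega
  · simp only [Nat.add_sub_cancel] at hi
    omega

theorem letterCount_eq_zero (ν : Fin N → Fin n) {s : ℕ} (hs : N ≤ s) (i : ℕ) :
    letterCount ν s i = 0 := by
  rw [letterCount, Finset.card_eq_zero, Finset.filter_eq_empty_iff]
  rintro q - ⟨hq, -⟩
  omega

theorem letterCount_anti (ν : Fin N → Fin n) {s s' : ℕ} (hs : s ≤ s') (i : ℕ) :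
    letterCount ν s' i ≤ letterCount ν s i :=
  Finset.card_le_card (Finset.monotone_filter_right _ fun _ _ h => ⟨hs.trans h.1, h.2⟩)

theorem letterCount_eq_succ_add (ν : Fin N → Fin n) (p : Fin N) (i : ℕ) :
    letterCount ν p i = letterCount ν (p + 1) i + if (ν p : ℕ) = i then 1 else 0 := by
  have hsplit : (Finset.univ.filter fun q : Fin N => (p : ℕ) ≤ q ∧ (ν q : ℕ) = i) =
      (Finset.univ.filter fun q : Fin N => (p : ℕ) + 1 ≤ q ∧ (ν q : ℕ) = i) ∪
        if (ν p : ℕ) = i then {p} else ∅ := by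
    ext q
    have hq : q = p ↔ (q : ℕ) = p := Fin.ext_iff
    split_ifs with hi <;>
      simp only [Finset.mem_union, Finset.mem_filter_univ, Finset.mem_singleton,
        Finset.notMem_empty, or_false, hq] <;>
      rcases Nat.lt_trichotomy q p with h | h | h <;> grind
  rw [letterCount, hsplit, Finset.card_union_of_disjoint, letterCount]
  · split_ifs <;> simp
  · split_ifs <;> simp

theorem letterCount_succ_lt (ν : Fin N → Fin n) {s : ℕ} {p : Fin N} (h : s ≤ p) :
    letterCount ν (p + 1) (ν p) < letterCount ν s (ν p) := by
  have hp := letterCount_eq_succ_add ν p (ν p)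
  rw [if_pos rfl] at hp
  have := letterCount_anti ν h (ν p)
  omega

theorem exists_letterCount_succ_eq (ν : Fin N → Fin n) {i t s : ℕ} (hs : s ≤ N)
    (ht : t < letterCount ν s i) :
    ∃ p : Fin N, s ≤ p ∧ (ν p : ℕ) = i ∧ letterCount ν (p + 1) i = t := by
  induction hs using Nat.decreasingInduction with
  | self => rw [letterCount_eq_zero ν le_rfl] at ht; omega
  | of_succ s hs ih =>
    by_cases h : t < letterCount ν (s + 1) i
    · obtain ⟨p, hp, hp'⟩ := ih h
      exact ⟨p, by omega, hp'⟩
    · have hstep := letterCount_eq_succ_add ν ⟨s, hs⟩ i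
      simp only at hstep
      split_ifs at hstep with hi
      · exact ⟨⟨s, hs⟩, le_rfl, hi, by simp only; omega⟩
      · omega

theorem letterCount_interlace (ν : Fin N → Fin n) {s : ℕ} (hs : s ≤ N)
    (hν : ∀ p : Fin N, s ≤ p → IsAddableAt ν p) (i : ℕ) :
    letterCount ν s (i + 1) ≤ letterCount ν s i ∧
      letterCount ν s i ≤ letterCount ν s (i + 1) + 1 := by
  induction hs using Nat.decreasingInduction with
  | self => simp [letterCount_eq_zero]
  | of_succ s hs ih =>
    have ih := ih fun p hp => hν p (by omega)
    have hadd := hν ⟨s, hs⟩ le_rfl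
    have hstep := letterCount_eq_succ_add ν ⟨s, hs⟩
    simp only [IsAddableAt, IsAddable] at hadd hstep
    rw [hstep, hstep]
    rcases eq_or_ne (ν ⟨s, hs⟩ : ℕ) i with h | h
    · rw [h] at hadd
      rw [if_neg (by omega), if_pos h]
      omega
    · rw [if_neg h]
      split_ifs with h'
      · rw [h', Nat.add_sub_cancel] at hadd
        omega
      · exact ih

theorem letterCount_swapSeq (ν : Fin N → Fin n) {j : ℕ} (h : j + 1 < N) {s : ℕ} (hs : s ≠ j + 1)
    (i : ℕ) : letterCount (swapSeq j h ν) s i = letterCount ν s i := by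
  refine Finset.card_bijective (posSwap j h) (posSwap j h).bijective fun q => ?_
  have hle : s ≤ (posSwap j h q : ℕ) ↔ s ≤ (q : ℕ) := by
    rw [val_posSwap]
    split_ifs <;> omega
  rw [Finset.mem_filter_univ, Finset.mem_filter_univ, hle]
  rfl

theorem posSwap_posSwap {j : ℕ} (h : j + 1 < N) (p : Fin N) :
    posSwap j h (posSwap j h p) = p :=
  Equiv.swap_apply_self _ _ p

theorem swapSeq_left (ν : Fin N → Fin n) {j : ℕ} (h : j + 1 < N) :
    swapSeq j h ν ⟨j, by omega⟩ = ν ⟨j + 1, h⟩ := by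
  simp [swapSeq, posSwap]

theorem swapSeq_right (ν : Fin N → Fin n) {j : ℕ} (h : j + 1 < N) :
    swapSeq j h ν ⟨j + 1, h⟩ = ν ⟨j, by omega⟩ := by
  simp [swapSeq, posSwap]

theorem posSwap_of_ne {j : ℕ} (h : j + 1 < N) {p : Fin N} (hj : (p : ℕ) ≠ j)
    (hj' : (p : ℕ) ≠ j + 1) : posSwap j h p = p := by
  simp [Fin.ext_iff, val_posSwap, hj, hj']

theorem swapSeq_of_ne (ν : Fin N → Fin n) {j : ℕ} (h : j + 1 < N) {p : Fin N}
    (hj : (p : ℕ) ≠ j) (hj' : (p : ℕ) ≠ j + 1) : swapSeq j h ν p = ν p := by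
  rw [swapSeq, Function.comp_apply, posSwap_of_ne h hj hj']

theorem swapSeq_eq_self (ν : Fin N → Fin n) {j : ℕ} (h : j + 1 < N)
    (hν : ν ⟨j, by omega⟩ = ν ⟨j + 1, h⟩) : swapSeq j h ν = ν := by
  funext p
  rw [swapSeq, Function.comp_apply, posSwap, Equiv.swap_apply_def]
  split_ifs with hp hp
  · rw [hp, hν]
  · rw [hp, hν]
  · rfl

theorem isAddableAt_swapSeq_right_iff (ν : Fin N → Fin n) {j : ℕ} (h : j + 1 < N) :
    IsAddableAt (swapSeq j h ν) ⟨j + 1, h⟩ ↔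
      IsAddable (letterCount ν (j + 2)) (ν ⟨j, by omega⟩) := by
  have hcount : letterCount (swapSeq j h ν) (j + 2) = letterCount ν (j + 2) :=
    funext (letterCount_swapSeq ν h (by omega))
  rw [IsAddableAt, swapSeq_right, hcount]

theorem IsAddableAt.not_isAddableAt_swapSeq {ν : Fin N → Fin n} {j : ℕ} {h : j + 1 < N}
    (hν : IsAddableAt ν ⟨j + 1, h⟩)
    (hadj : LettersAdjacent (ν ⟨j, by omega⟩) (ν ⟨j + 1, h⟩)) :
    ¬IsAddableAt (swapSeq j h ν) ⟨j + 1, h⟩ := by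
  rw [isAddableAt_swapSeq_right_iff]
  exact hadj.symm.not_isAddable hν

theorem isAddableAt_of_swapSeq {ν : Fin N → Fin n} {j : ℕ} {h : j + 1 < N}
    (hcomm : LettersCommute (ν ⟨j, by omega⟩) (ν ⟨j + 1, h⟩))
    (hν : IsAddableAt (swapSeq j h ν) ⟨j + 1, h⟩) : IsAddableAt ν ⟨j, by omega⟩ := by
  rw [isAddableAt_swapSeq_right_iff] at hν
  have hstep := letterCount_eq_succ_add ν ⟨j + 1, h⟩
  simp only [LettersCommute, LettersAdjacent, IsAddableAt, IsAddable] at *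
  rw [hstep, hstep, hstep, if_neg (by omega), if_neg (by omega)]
  split_ifs with hi <;> omega

theorem isAddableAt_of_adjacent_of_eq_zero {ν : Fin N → Fin n} {s : ℕ} {h : s + 1 < N}
    (hν : IsAddableAt ν ⟨s + 1, h⟩)
    (hadj : LettersAdjacent (ν ⟨s, by omega⟩) (ν ⟨s + 1, h⟩))
    (h0 : (ν ⟨s, by omega⟩ : ℕ) = 0) : IsAddableAt ν ⟨s, by omega⟩ := by
  have h1 : (ν ⟨s + 1, h⟩ : ℕ) = 1 := by
    rcases hadj with hadj | hadj <;> omega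
  have hstep := letterCount_eq_succ_add ν ⟨s + 1, h⟩
  simp only [IsAddableAt, IsAddable, h0, h1] at *
  simp only [hstep]
  grind

theorem isRemovable_of_not_isAddableAt {ν : Fin N → Fin n} {s : ℕ} (h : s + 1 < N)
    (hν : ∀ p : Fin N, s + 1 ≤ p → IsAddableAt ν p)
    (hadj : LettersAdjacent (ν ⟨s, by omega⟩) (ν ⟨s + 1, h⟩))
    (hs : (ν ⟨s, by omega⟩ : ℕ) = 0 ∨ ¬IsAddableAt ν ⟨s, by omega⟩) :
    IsRemovable (letterCount ν (s + 2)) (ν ⟨s, by omega⟩) := by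
  have hadd := hν ⟨s + 1, h⟩ le_rfl
  have hstep := letterCount_eq_succ_add ν ⟨s + 1, h⟩
  have hinter := letterCount_interlace ν h.le hν
  simp only [IsAddableAt, IsAddable, IsRemovable] at *
  rcases hadj with hadj | hadj
  · rw [← hadj] at hadd hstep
    generalize (ν ⟨s, _⟩ : ℕ) = i at *
    have hpred := hinter (i - 1)
    grind
  · rw [← hadj] at hs ⊢
    generalize (ν ⟨s + 1, _⟩ : ℕ) = i at *
    have hi := hinter (i + 1)
    grind

theorem exists_occurrence_of_isRemovable {ν : Fin N → Fin n} {s i : ℕ} (hs : s ≤ N)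
    (hν : ∀ p : Fin N, s ≤ p → IsAddableAt ν p) (hi : IsRemovable (letterCount ν s) i) :
    ∃ q : Fin N, s ≤ q ∧ (ν q : ℕ) = i ∧
      ∀ p : Fin N, s ≤ p → p < q → LettersCommute (ν p) i := by
  obtain ⟨hpred, hsucc⟩ := hi
  obtain ⟨q, hsq, rfl, hq⟩ :=
    exists_letterCount_succ_eq ν hs (show letterCount ν s (i + 1) < letterCount ν s i by omega)
  refine ⟨q, hsq, rfl, fun p hsp hpq => ?_⟩
  have hadd := hν q hsq
  have hlt := letterCount_succ_lt ν hsp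
  have hle := letterCount_anti ν (show (p : ℕ) + 1 ≤ q + 1 by omega) (ν p)
  have hle' := letterCount_anti ν (show (p : ℕ) + 1 ≤ q by omega) (ν q)
  have hqstep := letterCount_eq_succ_add ν q (ν q)
  rw [if_pos rfl] at hqstep
  rw [IsAddableAt, IsAddable, hq] at hadd
  refine ⟨fun h => ?_, fun h => ?_⟩
  · rw [h] at hlt
    omega
  · rcases h with h | h
    · rw [show (ν p : ℕ) = ν q - 1 by omega] at hlt hle
      omega
    · rw [← h] at hlt hle
      omega

end LetterCounts

section Polynomials

open MvPolynomial

variable {k : Type} [Field k] {A : Type} [Ring A] [Algebra k A]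

theorem sum_support_coeff_mul_eq_constr {σ : Type} (f : (σ →₀ ℕ) → A) (p : MvPolynomial σ k) :
    ∑ d ∈ p.support, algebraMap k A (coeff d p) * f d =
      (basisMonomials σ k).constr k f p := by
  simp only [← Algebra.smul_def]
  rw [Module.Basis.constr_apply]
  rfl

theorem eval2_eq_constr (p : MvPolynomial (Fin 2) k) (a b : A) :
    eval2 k p a b = (basisMonomials (Fin 2) k).constr k (fun d => a ^ d 0 * b ^ d 1) p :=
  sum_support_coeff_mul_eq_constr _ p

theorem eval3_eq_constr (p : MvPolynomial (Fin 3) k) (a b c : A) :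
    eval3 k p a b c =
      (basisMonomials (Fin 3) k).constr k (fun d => a ^ d 0 * b ^ d 1 * c ^ d 2) p :=
  sum_support_coeff_mul_eq_constr _ p

theorem eval2_add (p q : MvPolynomial (Fin 2) k) (a b : A) :
    eval2 k (p + q) a b = eval2 k p a b + eval2 k q a b := by
  simp only [eval2_eq_constr, map_add]

theorem eval2_monomial (d : Fin 2 →₀ ℕ) (t : k) (a b : A) :
    eval2 k (monomial d t) a b = algebraMap k A t * (a ^ d 0 * b ^ d 1) := by
  have hd : monomial d t = t • basisMonomials (Fin 2) k d := by simp [smul_monomial]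
  rw [eval2_eq_constr, hd, map_smul, Module.Basis.constr_basis, Algebra.smul_def]

theorem eval2_one (a b : A) : eval2 k 1 a b = 1 := by
  simpa using eval2_monomial (k := k) 0 1 a b

theorem eval2_zero (a b : A) : eval2 k 0 a b = 0 := by
  simp [eval2]

theorem eval3_add (p q : MvPolynomial (Fin 3) k) (a b c : A) :
    eval3 k (p + q) a b c = eval3 k p a b c + eval3 k q a b c := by
  simp only [eval3_eq_constr, map_add]

theorem eval3_monomial (d : Fin 3 →₀ ℕ) (t : k) (a b c : A) :
    eval3 k (monomial d t) a b c = algebraMap k A t * (a ^ d 0 * b ^ d 1 * c ^ d 2) := by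
  have hd : monomial d t = t • basisMonomials (Fin 3) k d := by simp [smul_monomial]
  rw [eval3_eq_constr, hd, map_smul, Module.Basis.constr_basis, Algebra.smul_def]

theorem eval3_zero (a b c : A) : eval3 k 0 a b c = 0 := by
  simp [eval3]

theorem map_eval2 {B : Type} [Ring B] [Algebra k B] (φ : A →ₐ[k] B) (p : MvPolynomial (Fin 2) k)
    (a b : A) : φ (eval2 k p a b) = eval2 k p (φ a) (φ b) := by
  simp [eval2, map_sum]

theorem map_eval3 {B : Type} [Ring B] [Algebra k B] (φ : A →ₐ[k] B) (p : MvPolynomial (Fin 3) k)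
    (a b c : A) : φ (eval3 k p a b c) = eval3 k p (φ a) (φ b) (φ c) := by
  simp [eval3, map_sum]

theorem Qbar_eq_of_sub_eq_mul (p : MvPolynomial (Fin 2) k) (q : MvPolynomial (Fin 3) k)
    (h : rename (fun i : Fin 2 => if i = 0 then (0 : Fin 3) else 1) p -
          rename (fun i : Fin 2 => if i = 0 then (2 : Fin 3) else 1) p =
        (X 0 - X 2) * q) : Qbar k p = q := by
  rw [Qbar, h, map_mul, map_sub, finSuccEquiv_X_zero, show (2 : Fin 3) = Fin.succ 1 from rfl,
    finSuccEquiv_X_succ, Polynomial.mul_divByMonic_cancel_left _ (Polynomial.monic_X_sub_C _),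
    AlgEquiv.symm_apply_apply]

theorem Qbar_one : Qbar k 1 = 0 :=
  Qbar_eq_of_sub_eq_mul 1 0 (by simp)

theorem Qbar_monomial_one_add_monomial (t t' : k) (s : ℕ) :
    Qbar k (monomial (Finsupp.single 0 1) t + monomial (Finsupp.single 1 s) t') =
      monomial 0 t := by
  apply Qbar_eq_of_sub_eq_mul
  rw [← C_apply]
  simp only [← C_mul_X_pow_eq_monomial, map_add, map_mul, map_pow, rename_C, rename_X, if_true,
    one_ne_zero, if_false]
  ring

theorem Qbar_monomial_two_add_monomial (t t' : k) (s : ℕ) :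
    Qbar k (monomial (Finsupp.single 0 2) t + monomial (Finsupp.single 1 s) t') =
      monomial (Finsupp.single 0 1) t + monomial (Finsupp.single 2 1) t := by
  apply Qbar_eq_of_sub_eq_mul
  simp only [← C_mul_X_pow_eq_monomial, map_add, map_mul, map_pow, rename_C, rename_X, if_true,
    one_ne_zero, if_false]
  ring

theorem eq_monomial_add_monomial_of_support_subset {σ : Type} {p : MvPolynomial σ k}
    {d d' : σ →₀ ℕ} (hd : d ≠ d') (hp : p.support ⊆ {d, d'}) :
    p = monomial d (coeff d p) + monomial d' (coeff d' p) := by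
  conv_lhs => rw [p.as_sum]
  rw [← Finset.sum_pair (f := fun x => monomial x (coeff x p)) hd]
  exact Finset.sum_subset hp fun x _ hx => by rw [notMem_support_iff.1 hx, monomial_zero]

end Polynomials

section TypeB

open MvPolynomial

variable {k : Type} [Field k] {A : Type} [Ring A] [Algebra k A] {n : ℕ}
  {Q : Fin n → Fin n → MvPolynomial (Fin 2) k}

theorem AB_of_lettersCommute {i j : Fin n} (h : LettersCommute i j) : AB n i j = 0 := by
  obtain ⟨hne, hadj⟩ := h
  rw [LettersAdjacent] at hadj
  rw [AB, if_neg (fun hij => hne (by rw [hij])), if_neg (by omega), if_neg (by omega)]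

theorem AB_of_lettersAdjacent {i j : Fin n} (h : LettersAdjacent i j) :
    AB n i j = if (i : ℕ) = 0 then -2 else -1 := by
  rw [LettersAdjacent] at h
  rw [AB, if_neg (fun hij => by rw [hij] at h; omega)]
  split_ifs <;> omega

theorem QAdmissible.eq_one (hQ : QAdmissible k (AB n) (dB n) Q) {i j : Fin n}
    (h : LettersCommute i j) : Q i j = 1 := by
  apply hQ.2.2.1 i j fun hij => h.1 (by rw [hij])
  rw [AB_of_lettersCommute h, mul_zero]

theorem QAdmissible.exists_eq_monomial_add (hQ : QAdmissible k (AB n) (dB n) Q) {i j : Fin n}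
    (h : LettersAdjacent i j) : ∃ (t t' : k) (s : ℕ), t ≠ 0 ∧
      Q i j = monomial (Finsupp.single 0 (if (i : ℕ) = 0 then 2 else 1)) t +
        monomial (Finsupp.single 1 (s + 1)) t' := by
  have hne : i ≠ j := by
    rintro rfl
    rcases h with h | h <;> omega
  have hsupp := hQ.2.2.2.1 i j hne
  have hlead := hQ.2.2.2.2 i j hne
  have hexp : (-(if (i : ℕ) = 0 then (-2 : ℤ) else -1)).toNat = if (i : ℕ) = 0 then 2 else 1 := by
    split_ifs <;> rfl
  rw [AB_of_lettersAdjacent h] at hsupp hlead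
  rw [hexp] at hlead
  refine ⟨_, _, if (j : ℕ) = 0 then 1 else 0, hlead,
    eq_monomial_add_monomial_of_support_subset ?_ fun d hd => ?_⟩
  · intro heq
    have := DFunLike.congr_fun heq 0
    split_ifs at this <;> simp at this
  · have hdeg := hsupp d hd
    simp only [Finset.mem_insert, Finset.mem_singleton, Finsupp.ext_iff, Fin.forall_fin_two,
      Finsupp.single_apply, dB, LettersAdjacent] at *
    split_ifs at hdeg ⊢ <;> simp <;> omega

theorem QAdmissible.exists_eval2_eq (hQ : QAdmissible k (AB n) (dB n) Q) {i j : Fin n}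
    (h : LettersAdjacent i j) (x y : A) : ∃ (t t' : k) (s : ℕ), t ≠ 0 ∧
      eval2 k (Q i j) x y = algebraMap k A t * x ^ (if (i : ℕ) = 0 then 2 else 1) +
        algebraMap k A t' * y ^ (s + 1) := by
  obtain ⟨t, t', s, ht, hQij⟩ := hQ.exists_eq_monomial_add h
  refine ⟨t, t', s, ht, ?_⟩
  rw [hQij, eval2_add, eval2_monomial, eval2_monomial]
  simp

theorem QAdmissible.eval3_Qbar_eq_zero (hQ : QAdmissible k (AB n) (dB n) Q) {i j : Fin n}
    (h : LettersCommute i j) (x y z : A) : eval3 k (Qbar k (Q i j)) x y z = 0 := by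
  rw [hQ.eq_one h, Qbar_one, eval3_zero]

theorem QAdmissible.exists_eval3_Qbar_eq_of_ne_zero (hQ : QAdmissible k (AB n) (dB n) Q)
    {i j : Fin n} (h : LettersAdjacent i j) (hi : (i : ℕ) ≠ 0) (x y z : A) :
    ∃ t : k, t ≠ 0 ∧ eval3 k (Qbar k (Q i j)) x y z = algebraMap k A t := by
  obtain ⟨t, t', s, ht, hQij⟩ := hQ.exists_eq_monomial_add h
  refine ⟨t, ht, ?_⟩
  rw [hQij, if_neg hi, Qbar_monomial_one_add_monomial, eval3_monomial]
  simp

theorem QAdmissible.exists_eval3_Qbar_eq_of_eq_zero (hQ : QAdmissible k (AB n) (dB n) Q)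
    {i j : Fin n} (h : LettersAdjacent i j) (hi : (i : ℕ) = 0) (x y z : A) :
    ∃ t : k, t ≠ 0 ∧ eval3 k (Qbar k (Q i j)) x y z = algebraMap k A t * (x + z) := by
  obtain ⟨t, t', s, ht, hQij⟩ := hQ.exists_eq_monomial_add h
  refine ⟨t, ht, ?_⟩
  rw [hQij, if_pos hi, Qbar_monomial_two_add_monomial, eval3_add, eval3_monomial, eval3_monomial]
  simp [mul_add]

end TypeB

section Vanishing

/-- The relations between the elements `e(ν)` and `τ_j` of a quiver Hecke algebra that do not
involve the polynomials `Q_{i,j}`. -/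
structure IdempotentRels {A : Type} [Ring A] {n N : ℕ} (E : (Fin N → Fin n) → A)
    (T : (j : ℕ) → j + 1 < N → A) : Prop where
  e_mul_e_of_ne : ∀ ν ν', ν ≠ ν' → E ν * E ν' = 0
  e_mul_e : ∀ ν, E ν * E ν = E ν
  sum_e : ∑ ν, E ν = 1
  t_mul_e : ∀ j h ν, T j h * E ν = E (swapSeq j h ν) * T j h
  t_mul_t : ∀ a ha b hb, (a + 1 < b ∨ b + 1 < a) → T a ha * T b hb = T b hb * T a ha

/-- The defining relations of the cyclotomic quiver Hecke algebra that the vanishing argument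
uses, for elements `E ν`, `X p`, `T j` of an arbitrary algebra. The cyclotomic relation is the one
for `Λ = Λ₁`. -/
structure CyclotomicRels (k : Type) [Field k] {A : Type} [Ring A] [Algebra k A] {n N : ℕ}
    (Q : Fin n → Fin n → MvPolynomial (Fin 2) k) (S : Set (Fin N → Fin n))
    (E : (Fin N → Fin n) → A) (X : Fin N → A) (T : (j : ℕ) → j + 1 < N → A) : Prop
    extends IdempotentRels E T where
  e_of_notMem : ∀ ν, ν ∉ S → E ν = 0
  t_mul_t_mul_e : ∀ j h ν, T j h * T j h * E ν =
    eval2 k (Q (ν ⟨j, by omega⟩) (ν ⟨j + 1, h⟩)) (X ⟨j, by omega⟩) (X ⟨j + 1, h⟩) * E ν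
  t_mul_x_mul_e : ∀ j h ν, ν ⟨j, by omega⟩ = ν ⟨j + 1, h⟩ →
    T j h * X ⟨j + 1, h⟩ * E ν = X ⟨j, by omega⟩ * T j h * E ν + E ν
  t_mul_x_mul_e_of_ne : ∀ j h ν p, ν ⟨j, by omega⟩ ≠ ν ⟨j + 1, h⟩ →
    T j h * X p * E ν = X (posSwap j h p) * T j h * E ν
  braid_of_ne : ∀ j (h1 : j + 1 < N) (h2 : j + 2 < N) ν, ν ⟨j, by omega⟩ ≠ ν ⟨j + 2, h2⟩ →
    T (j + 1) h2 * T j h1 * T (j + 1) h2 * E ν = T j h1 * T (j + 1) h2 * T j h1 * E ν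
  braid_of_eq : ∀ j (h1 : j + 1 < N) (h2 : j + 2 < N) ν, ν ⟨j, by omega⟩ = ν ⟨j + 2, h2⟩ →
    T (j + 1) h2 * T j h1 * T (j + 1) h2 * E ν = T j h1 * T (j + 1) h2 * T j h1 * E ν +
      eval3 k (Qbar k (Q (ν ⟨j, by omega⟩) (ν ⟨j + 1, h1⟩)))
        (X ⟨j, by omega⟩) (X ⟨j + 1, h1⟩) (X ⟨j + 2, h2⟩) * E ν
  x_mul_e_last : ∀ ν (p : Fin N), (p : ℕ) + 1 = N → X p * E ν = 0
  e_of_last_ne : ∀ ν (p : Fin N), (p : ℕ) + 1 = N → (ν p : ℕ) ≠ 0 → E ν = 0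

variable {k : Type} [Field k] {A : Type} [Ring A] [Algebra k A] {n N : ℕ}
  {Q : Fin n → Fin n → MvPolynomial (Fin 2) k} {S : Set (Fin N → Fin n)}
  {E : (Fin N → Fin n) → A} {X : Fin N → A} {T : (j : ℕ) → j + 1 < N → A}

theorem cyclotomicRels_of_map_eq (hn : 0 < n) (φ : FA k n N →ₐ[k] A)
    (hφ : ∀ a b, CRel k Q S (Pi.single ⟨0, hn⟩ 1) a b → φ a = φ b) :
    CyclotomicRels k Q S (fun ν => φ (Eg k ν)) (fun p => φ (Xg k p))
      (fun j h => φ (Tg k j h)) := by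
  have hrel : ∀ {a b}, Rel k Q S a b → φ a = φ b := fun h => hφ _ _ (.inl h)
  have hout : ∀ ν, ν ∉ S → φ (Eg k ν) = 0 := fun ν hν => by simpa using hrel (.e_out ν hν)
  have hcyc : ∀ ν (p : Fin N), (p : ℕ) + 1 = N →
      φ (Xg k p) ^ ((Pi.single ⟨0, hn⟩ 1 : Fin n → ℤ) (ν p)).toNat * φ (Eg k ν) = 0 := by
    intro ν p hp
    by_cases hν : ν ∈ S
    · simpa using hφ _ _ (.inr (.cyc ν hν p hp))
    · rw [hout ν hν, mul_zero]
  have hlast : ∀ ν (p : Fin N), (p : ℕ) + 1 = N → (ν p : ℕ) ≠ 0 → φ (Eg k ν) = 0 := by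
    intro ν p hp h0
    simpa [Pi.single_eq_of_ne (show ν p ≠ ⟨0, hn⟩ from fun h => h0 (by rw [h]))] using hcyc ν p hp
  exact
    { e_mul_e_of_ne := fun ν ν' h => by simpa using hrel (.e_orth ν ν' h)
      e_mul_e := fun ν => by simpa using hrel (.e_idem ν)
      sum_e := by simpa using hrel .e_sum
      e_of_notMem := hout
      t_mul_e := fun j h ν => by simpa using hrel (.te j h ν)
      t_mul_t := fun a ha b hb hab => by simpa using hrel (.tt a ha b hb hab)
      t_mul_t_mul_e := fun j h ν => by simpa [map_eval2] using hrel (.tsq j h ν)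
      t_mul_x_mul_e := fun j h ν hν => by simpa using hrel (.tx_right j h ν hν)
      t_mul_x_mul_e_of_ne := fun j h ν p hν => by simpa using hrel (.tx_comm j h ν p (.inl hν))
      braid_of_ne := fun j h1 h2 ν hν => by simpa using hrel (.braid_ne j h1 h2 ν hν)
      braid_of_eq := fun j h1 h2 ν hν => by
        simpa [map_eval3] using hrel (.braid_eq j h1 h2 ν hν)
      x_mul_e_last := fun ν p hp => by
        by_cases h0 : (ν p : ℕ) = 0
        · simpa [show ν p = ⟨0, hn⟩ from Fin.ext h0] using hcyc ν p hp
        · rw [hlast ν p hp h0, mul_zero]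
      e_of_last_ne := hlast }

/-- The vanishing statement at the positions `≥ s`, proved by descending induction on `s`. -/
def VanishesFrom (E : (Fin N → Fin n) → A) (X : Fin N → A) (s : ℕ) : Prop :=
  ∀ (ν : Fin N → Fin n) (p : Fin N), s ≤ p → (¬IsAddableAt ν p → E ν = 0) ∧ X p * E ν = 0

theorem eq_zero_of_algebraMap_mul_eq_zero {t : k} (ht : t ≠ 0) {y : A}
    (h : algebraMap k A t * y = 0) : y = 0 := by
  rw [← Algebra.smul_def] at h
  exact (smul_eq_zero_iff_right ht).1 h

namespace CyclotomicRels

theorem t_mul_t_mul_e_of_commute (hQ : QAdmissible k (AB n) (dB n) Q)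
    (R : CyclotomicRels k Q S E X T) {j : ℕ} (h : j + 1 < N) {ν : Fin N → Fin n}
    (hν : LettersCommute (ν ⟨j, by omega⟩) (ν ⟨j + 1, h⟩)) : T j h * T j h * E ν = E ν := by
  rw [R.t_mul_t_mul_e, hQ.eq_one hν, eval2_one, one_mul]

theorem t_mul_e_swapSeq_mul_t (hQ : QAdmissible k (AB n) (dB n) Q)
    (R : CyclotomicRels k Q S E X T) {j : ℕ} (h : j + 1 < N) {ν : Fin N → Fin n}
    (hν : LettersCommute (ν ⟨j, by omega⟩) (ν ⟨j + 1, h⟩)) :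
    T j h * E (swapSeq j h ν) * T j h = E ν := by
  rw [mul_assoc, ← R.t_mul_e, ← mul_assoc, R.t_mul_t_mul_e_of_commute hQ h hν]

theorem t_mul_x_mul_e_swapSeq_mul_t (hQ : QAdmissible k (AB n) (dB n) Q)
    (R : CyclotomicRels k Q S E X T) {j : ℕ} (h : j + 1 < N) {ν : Fin N → Fin n}
    (hν : LettersCommute (ν ⟨j, by omega⟩) (ν ⟨j + 1, h⟩)) (p : Fin N) :
    T j h * (X (posSwap j h p) * E (swapSeq j h ν)) * T j h = X p * E ν := by
  have hne : swapSeq j h ν ⟨j, by omega⟩ ≠ swapSeq j h ν ⟨j + 1, h⟩ := by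
    rw [swapSeq_left, swapSeq_right]
    exact fun heq => hν.1 (by rw [heq])
  rw [← mul_assoc, R.t_mul_x_mul_e_of_ne j h _ _ hne, posSwap_posSwap, mul_assoc (X p),
    mul_assoc (X p), R.t_mul_e_swapSeq_mul_t hQ h hν]

theorem t_mul_e_eq_zero_of_adjacent (R : CyclotomicRels k Q S E X T) {s : ℕ}
    (hV : VanishesFrom E X s) {j : ℕ} (h : j + 1 < N) (hs : s ≤ j + 1) {ν : Fin N → Fin n}
    (hadj : LettersAdjacent (ν ⟨j, by omega⟩) (ν ⟨j + 1, h⟩))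
    (hν : IsAddableAt ν ⟨j + 1, h⟩) : T j h * E ν = 0 := by
  rw [R.t_mul_e, (hV _ ⟨j + 1, h⟩ hs).1 (hν.not_isAddableAt_swapSeq hadj), zero_mul]

theorem e_eq_zero_of_eq (hQ : QAdmissible k (AB n) (dB n) Q) (R : CyclotomicRels k Q S E X T)
    {s : ℕ} (h : s + 1 < N) {ν : Fin N → Fin n} (heq : ν ⟨s, by omega⟩ = ν ⟨s + 1, h⟩)
    (hX : X ⟨s + 1, h⟩ * E ν = 0) : E ν = 0 := by
  have hsq : T s h * T s h * E ν = 0 := by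
    rw [R.t_mul_t_mul_e, heq, hQ.1, eval2_zero, zero_mul]
  have hcomm : T s h * E ν = E ν * T s h := by
    rw [R.t_mul_e, swapSeq_eq_self ν h heq]
  have hE : E ν = -(X ⟨s, by omega⟩ * (T s h * E ν)) := by
    have hrel := R.t_mul_x_mul_e s h ν heq
    rw [mul_assoc, hX, mul_zero, add_comm, mul_assoc] at hrel
    exact eq_neg_of_add_eq_zero_left hrel.symm
  have hTE : T s h * E ν = 0 :=
    calc T s h * E ν = E ν * T s h := hcomm
      _ = -(X ⟨s, by omega⟩ * (T s h * (E ν * T s h))) := by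
        conv_lhs => rw [hE]
        noncomm_ring
      _ = 0 := by rw [← hcomm, ← mul_assoc (T s h), hsq, mul_zero, neg_zero]
  rw [hE, hTE, mul_zero, neg_zero]

theorem vanish_of_braid (hQ : QAdmissible k (AB n) (dB n) Q) (R : CyclotomicRels k Q S E X T)
    {s : ℕ} (hV : VanishesFrom E X (s + 1)) (h : s + 2 < N) {ν : Fin N → Fin n}
    (hν : ∀ p : Fin N, s + 1 ≤ p → IsAddableAt ν p)
    (hadj : LettersAdjacent (ν ⟨s, by omega⟩) (ν ⟨s + 1, by omega⟩))
    (heq : ν ⟨s, by omega⟩ = ν ⟨s + 2, h⟩) :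
    ((ν ⟨s, by omega⟩ : ℕ) = 0 → X ⟨s, by omega⟩ * E ν = 0) ∧
      ((ν ⟨s, by omega⟩ : ℕ) ≠ 0 → E ν = 0) := by
  have h1 : s + 1 < N := by omega
  have hT : T s h1 * E ν = 0 :=
    R.t_mul_e_eq_zero_of_adjacent hV h1 le_rfl hadj (hν _ le_rfl)
  have hT' : T (s + 1) h * E ν = 0 :=
    R.t_mul_e_eq_zero_of_adjacent hV h (by omega) (heq ▸ hadj.symm) (hν _ (by simp))
  have hbraid := R.braid_of_eq s h1 h ν heq
  rw [mul_assoc _ _ (E ν), hT', mul_zero, mul_assoc _ _ (E ν), hT, mul_zero, zero_add] at hbraid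
  constructor <;> intro h0
  · obtain ⟨t, ht, heval⟩ := hQ.exists_eval3_Qbar_eq_of_eq_zero hadj h0 (X ⟨s, by omega⟩)
      (X ⟨s + 1, h1⟩) (X ⟨s + 2, h⟩)
    rw [heval, mul_assoc] at hbraid
    have := eq_zero_of_algebraMap_mul_eq_zero ht hbraid.symm
    rwa [add_mul, (hV ν ⟨s + 2, h⟩ (by simp)).2, add_zero] at this
  · obtain ⟨t, ht, heval⟩ := hQ.exists_eval3_Qbar_eq_of_ne_zero hadj h0 (X ⟨s, by omega⟩)
      (X ⟨s + 1, h1⟩) (X ⟨s + 2, h⟩)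
    rw [heval] at hbraid
    exact eq_zero_of_algebraMap_mul_eq_zero ht hbraid.symm

theorem vanish_of_occurrence (hQ : QAdmissible k (AB n) (dB n) Q)
    (R : CyclotomicRels k Q S E X T) {s q : ℕ} (hV : VanishesFrom E X (s + 1)) (hsq : s + 2 ≤ q)
    (hq : q < N) {ν : Fin N → Fin n}
    (hadj : LettersAdjacent (ν ⟨s, by omega⟩) (ν ⟨s + 1, by omega⟩))
    (heq : ν ⟨s, by omega⟩ = ν ⟨q, hq⟩)
    (hcomm : ∀ p : Fin N, s + 2 ≤ p → (p : ℕ) < q → LettersCommute (ν p) (ν ⟨s, by omega⟩)) :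
    ((ν ⟨s, by omega⟩ : ℕ) = 0 → X ⟨s, by omega⟩ * E ν = 0) ∧
      ((ν ⟨s, by omega⟩ : ℕ) ≠ 0 → E ν = 0) := by
  induction q, hsq using Nat.le_induction generalizing ν with
  | base =>
    by_cases hν : ∀ p : Fin N, s + 1 ≤ p → IsAddableAt ν p
    · exact R.vanish_of_braid hQ hV hq hν hadj heq
    · push Not at hν
      obtain ⟨p, hp, hpν⟩ := hν
      simp [(hV ν p hp).1 hpν]
  | succ q hsq ih =>
    have hqcomm : LettersCommute (ν ⟨q, by omega⟩) (ν ⟨q + 1, hq⟩) := by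
      rw [← heq]
      exact hcomm ⟨q, by omega⟩ hsq (Nat.lt_succ_self q)
    have hs : swapSeq q hq ν ⟨s, by omega⟩ = ν ⟨s, by omega⟩ :=
      swapSeq_of_ne ν hq (by simp only; omega) (by simp only; omega)
    have hs' : swapSeq q hq ν ⟨s + 1, by omega⟩ = ν ⟨s + 1, by omega⟩ :=
      swapSeq_of_ne ν hq (by simp only; omega) (by simp only; omega)
    obtain ⟨ihX, ihE⟩ := ih (by omega) (ν := swapSeq q hq ν) (by rwa [hs, hs'])
      (by rw [hs, heq, swapSeq_left]) fun p hp hpq => by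
        rw [hs, swapSeq_of_ne ν hq (by omega) (by omega)]
        exact hcomm p hp (by omega)
    rw [hs] at ihX ihE
    constructor <;> intro h0
    · rw [← R.t_mul_x_mul_e_swapSeq_mul_t hQ hq hqcomm,
        posSwap_of_ne hq (by simp only; omega) (by simp only; omega), ihX h0, mul_zero, zero_mul]
    · rw [← R.t_mul_e_swapSeq_mul_t hQ hq hqcomm, ihE h0, mul_zero, zero_mul]

theorem x_mul_e_eq_zero_of_adjacent (hQ : QAdmissible k (AB n) (dB n) Q)
    (R : CyclotomicRels k Q S E X T) {s : ℕ} (hV : VanishesFrom E X (s + 1)) (h : s + 1 < N)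
    {ν : Fin N → Fin n} (hν : IsAddableAt ν ⟨s + 1, h⟩)
    (hadj : LettersAdjacent (ν ⟨s, by omega⟩) (ν ⟨s + 1, h⟩))
    (h0 : (ν ⟨s, by omega⟩ : ℕ) ≠ 0) : X ⟨s, by omega⟩ * E ν = 0 := by
  obtain ⟨t, t', r, ht, heval⟩ := hQ.exists_eval2_eq hadj (X ⟨s, by omega⟩) (X ⟨s + 1, h⟩)
  have hsq := R.t_mul_t_mul_e s h ν
  rw [mul_assoc, R.t_mul_e_eq_zero_of_adjacent hV h le_rfl hadj hν, mul_zero, heval, if_neg h0,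
    pow_one, add_mul, mul_assoc, mul_assoc, pow_succ, mul_assoc _ (X ⟨s + 1, h⟩),
    (hV ν ⟨s + 1, h⟩ le_rfl).2, mul_zero, mul_zero, add_zero] at hsq
  exact eq_zero_of_algebraMap_mul_eq_zero ht hsq.symm

theorem vanish_of_adjacent (hQ : QAdmissible k (AB n) (dB n) Q)
    (R : CyclotomicRels k Q S E X T) {s : ℕ} (hV : VanishesFrom E X (s + 1)) (h : s + 1 < N)
    {ν : Fin N → Fin n} (hν : ∀ p : Fin N, s + 1 ≤ p → IsAddableAt ν p)
    (hadj : LettersAdjacent (ν ⟨s, by omega⟩) (ν ⟨s + 1, h⟩)) :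
    (¬IsAddableAt ν ⟨s, by omega⟩ → E ν = 0) ∧ X ⟨s, by omega⟩ * E ν = 0 := by
  by_cases hs : (ν ⟨s, by omega⟩ : ℕ) = 0 ∨ ¬IsAddableAt ν ⟨s, by omega⟩
  · obtain ⟨q, hsq, hqs, hcomm⟩ := exists_occurrence_of_isRemovable (Nat.succ_le_of_lt h)
      (fun p hp => hν p (by omega)) (isRemovable_of_not_isAddableAt h hν hadj hs)
    obtain ⟨hX, hE⟩ :=
      R.vanish_of_occurrence hQ hV hsq q.2 hadj (Fin.ext hqs.symm) fun p hp hpq => hcomm p hp hpq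
    by_cases h0 : (ν ⟨s, by omega⟩ : ℕ) = 0
    · exact ⟨fun hadd => absurd (isAddableAt_of_adjacent_of_eq_zero (hν _ le_rfl) hadj h0) hadd,
        hX h0⟩
    · simp [hE h0]
  · push Not at hs
    exact ⟨fun hadd => absurd hs.2 hadd,
      R.x_mul_e_eq_zero_of_adjacent hQ hV h (hν _ le_rfl) hadj hs.1⟩

theorem vanish_of_commute (hQ : QAdmissible k (AB n) (dB n) Q)
    (R : CyclotomicRels k Q S E X T) {s : ℕ} (hV : VanishesFrom E X (s + 1)) (h : s + 1 < N)
    {ν : Fin N → Fin n} (hcomm : LettersCommute (ν ⟨s, by omega⟩) (ν ⟨s + 1, h⟩)) :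
    (¬IsAddableAt ν ⟨s, by omega⟩ → E ν = 0) ∧ X ⟨s, by omega⟩ * E ν = 0 := by
  have hswap := hV (swapSeq s h ν) ⟨s + 1, h⟩ le_rfl
  constructor
  · intro hadd
    rw [← R.t_mul_e_swapSeq_mul_t hQ h hcomm,
      hswap.1 fun hadd' => hadd (isAddableAt_of_swapSeq hcomm hadd'), mul_zero, zero_mul]
  · have hpos : posSwap s h ⟨s, by omega⟩ = ⟨s + 1, h⟩ := Equiv.swap_apply_left _ _
    rw [← R.t_mul_x_mul_e_swapSeq_mul_t hQ h hcomm, hpos, hswap.2, mul_zero, zero_mul]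

theorem vanish_last (R : CyclotomicRels k Q S E X T) {p : Fin N} (hp : (p : ℕ) + 1 = N)
    (ν : Fin N → Fin n) : (¬IsAddableAt ν p → E ν = 0) ∧ X p * E ν = 0 := by
  refine ⟨fun hadd => R.e_of_last_ne ν p hp fun h0 => hadd ?_, R.x_mul_e_last ν p hp⟩
  exact ⟨.inl h0, by rw [letterCount_eq_zero ν hp.ge, letterCount_eq_zero ν hp.ge]⟩

theorem vanishesFrom (hQ : QAdmissible k (AB n) (dB n) Q) (R : CyclotomicRels k Q S E X T)
    {s : ℕ} (hs : s ≤ N) : VanishesFrom E X s := by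
  induction hs using Nat.decreasingInduction with
  | self => exact fun _ p hp => absurd p.2 (by omega)
  | of_succ s hs ih =>
    intro ν p hsp
    obtain hsp | rfl := hsp.lt_or_eq
    · exact ih ν p hsp
    by_cases hν : ∀ p' : Fin N, (p : ℕ) + 1 ≤ p' → IsAddableAt ν p'
    · obtain hp | hp : (p : ℕ) + 1 = N ∨ (p : ℕ) + 1 < N := by omega
      · exact R.vanish_last hp ν
      by_cases heq : ν p = ν ⟨p + 1, hp⟩
      · simp [R.e_eq_zero_of_eq hQ hp heq (ih ν _ le_rfl).2]
      by_cases hadj : LettersAdjacent (ν p) (ν ⟨p + 1, hp⟩)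
      · exact R.vanish_of_adjacent hQ ih hp hν hadj
      · exact R.vanish_of_commute hQ ih hp ⟨fun h => heq (Fin.ext h), hadj⟩
    · push Not at hν
      obtain ⟨p', hp', hpν⟩ := hν
      simp [(ih ν p' hp').1 hpν]

theorem x_mul_e (hQ : QAdmissible k (AB n) (dB n) Q) (R : CyclotomicRels k Q S E X T)
    (p : Fin N) (ν : Fin N → Fin n) : X p * E ν = 0 :=
  (R.vanishesFrom hQ (Nat.zero_le N) ν p (Nat.zero_le p)).2

theorem isAddableAt_of_e_ne_zero (hQ : QAdmissible k (AB n) (dB n) Q)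
    (R : CyclotomicRels k Q S E X T) {ν : Fin N → Fin n} (hν : E ν ≠ 0) (p : Fin N) :
    IsAddableAt ν p :=
  by_contra fun h => hν ((R.vanishesFrom hQ (Nat.zero_le N) ν p (Nat.zero_le p)).1 h)

end CyclotomicRels

end Vanishing

section Tableaux

variable {n N : ℕ} {l : List ℕ} {f g : Fin N → ℕ × ℕ}

theorem getD_add_add_le (hdec : l.Pairwise (· > ·)) {i d : ℕ} (h : i + d < l.length) :
    l.getD (i + d) 0 + d ≤ l.getD i 0 := by
  induction d with
  | zero => simp
  | succ d ih =>
    have ih := ih (by omega)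
    have hlt : l.getD (i + (d + 1)) 0 < l.getD (i + d) 0 := by
      rw [List.getD_eq_getElem _ _ h, List.getD_eq_getElem _ _ (by omega)]
      exact List.pairwise_iff_getElem.1 hdec _ _ _ _ (by omega)
    omega

theorem mem_diagram_of_le (hdec : l.Pairwise (· > ·)) {b b' : ℕ × ℕ} (hb' : b' ∈ diagram l)
    (hle : b ≤ b') (hrow : 1 ≤ b.1) (hdiag : b.1 ≤ b.2) : b ∈ diagram l := by
  obtain ⟨hlen, -, -, hcol⟩ := hb'
  obtain ⟨hle₁, hle₂⟩ := hle
  have hgetD := getD_add_add_le hdec (i := b.1 - 1) (d := b'.1 - b.1) (by omega)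
  rw [show b.1 - 1 + (b'.1 - b.1) = b'.1 - 1 by omega] at hgetD
  exact ⟨by omega, hrow, hdiag, by omega⟩

theorem val_resFin (hn : 0 < n) (hle : ∀ x ∈ l, x ≤ n) {b : ℕ × ℕ} (hb : b ∈ diagram l) :
    (resFin n hn b : ℕ) = b.2 - b.1 := by
  obtain ⟨hlen, -, -, hcol⟩ := hb
  have hrow : l.getD (b.1 - 1) 0 ≤ n := by
    rw [List.getD_eq_getElem _ _ hlen]
    exact hle _ (List.getElem_mem _)
  simp only [resFin]
  omega

theorem IsSYT.mem_diagram (hf : IsSYT l N f) (a : Fin N) : f a ∈ diagram l :=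
  hf.2.1 ▸ Set.mem_range_self a

theorem IsSYT.one_le_row (hf : IsSYT l N f) (a : Fin N) : 1 ≤ (f a).1 := (hf.mem_diagram a).2.1

theorem IsSYT.row_le_col (hf : IsSYT l N f) (a : Fin N) : (f a).1 ≤ (f a).2 :=
  (hf.mem_diagram a).2.2.1

theorem IsSYT.exists_eq_of_le (hdec : l.Pairwise (· > ·)) (hf : IsSYT l N f) {b : ℕ × ℕ}
    {a : Fin N} (hle : b ≤ f a) (hrow : 1 ≤ b.1) (hdiag : b.1 ≤ b.2) : ∃ m, f m = b := by
  have hb := mem_diagram_of_le hdec (hf.mem_diagram a) hle hrow hdiag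
  rwa [← hf.2.1] at hb

theorem IsSYT.le_of_le (hdec : l.Pairwise (· > ·)) (hf : IsSYT l N f) {a b : Fin N}
    (h : f a ≤ f b) : a ≤ b := by
  obtain ⟨m, hm⟩ := hf.exists_eq_of_le hdec (b := ((f a).1, (f b).2)) (a := b) ⟨h.1, le_rfl⟩
    (hf.one_le_row a) ((hf.row_le_col a).trans h.2)
  have hrow : (f a).1 = (f m).1 := by rw [hm]
  have hcol : (f m).2 = (f b).2 := by rw [hm]
  have ham : a ≤ m := by
    rcases h.2.eq_or_lt with h₂ | h₂
    · exact (hf.1 (Prod.ext hrow (h₂.trans hcol.symm))).le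
    · exact (hf.2.2.1 a m hrow (hcol ▸ h₂)).le
  have hmb : m ≤ b := by
    rcases h.1.eq_or_lt with h₁ | h₁
    · exact (hf.1 (Prod.ext (hrow.symm.trans h₁) hcol)).le
    · exact (hf.2.2.2 m b hcol (hrow ▸ h₁)).le
  exact ham.trans hmb

theorem isSYT_iff (hdec : l.Pairwise (· > ·)) :
    IsSYT l N f ↔ Function.Injective f ∧ Set.range f = diagram l ∧ ∀ a b, f a ≤ f b → a ≤ b := by
  refine ⟨fun hf => ⟨hf.1, hf.2.1, fun _ _ => hf.le_of_le hdec⟩,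
    fun ⟨hinj, hrange, hmono⟩ => ⟨hinj, hrange, fun a b hrow hcol => ?_, fun a b hcol hrow => ?_⟩⟩
  · exact lt_of_le_of_ne (hmono a b ⟨hrow.le, hcol.le⟩) fun h => hcol.ne (by rw [h])
  · exact lt_of_le_of_ne (hmono a b ⟨hrow.le, hcol.le⟩) fun h => hrow.ne (by rw [h])

theorem val_resSeq (hn : 0 < n) (hle : ∀ x ∈ l, x ≤ n) (hf : IsSYT l N f) (p : Fin N) :
    (resSeq n hn f p : ℕ) = (f p.rev).2 - (f p.rev).1 :=
  val_resFin hn hle (hf.mem_diagram _)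

theorem IsSYT.position_le_of_le (hdec : l.Pairwise (· > ·)) (hf : IsSYT l N f) {p q : Fin N}
    (h : f p.rev ≤ f q.rev) : q ≤ p :=
  Fin.rev_le_rev.1 (hf.le_of_le hdec h)

theorem swapEnt_rev (f : Fin N → ℕ × ℕ) {j : ℕ} (h : j + 1 < N) (p : Fin N) :
    swapEnt j h f p.rev = f (posSwap j h p).rev := by
  simp only [swapEnt, posSwap, Function.comp_apply, Equiv.swap_apply_def, Fin.rev_inj]
  split_ifs <;> rfl

theorem resSeq_swapEnt (hn : 0 < n) (f : Fin N → ℕ × ℕ) {j : ℕ} (h : j + 1 < N) :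
    resSeq n hn (swapEnt j h f) = swapSeq j h (resSeq n hn f) := by
  funext p
  simp only [resSeq, swapSeq, Function.comp_apply, swapEnt_rev]

theorem swapEnt_swapEnt (f : Fin N → ℕ × ℕ) {j : ℕ} (h : j + 1 < N) :
    swapEnt j h (swapEnt j h f) = f := by
  funext a
  rw [← Fin.rev_rev a, swapEnt_rev, swapEnt_rev, posSwap_posSwap]

theorem isSYT_swapEnt_iff (hdec : l.Pairwise (· > ·)) (hf : IsSYT l N f) {j : ℕ}
    (h : j + 1 < N) :
    IsSYT l N (swapEnt j h f) ↔ ¬f (Fin.rev ⟨j + 1, h⟩) ≤ f (Fin.rev ⟨j, by omega⟩) := by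
  have hswap : ∀ p q : Fin N, (swapEnt j h f p.rev ≤ swapEnt j h f q.rev → p.rev ≤ q.rev) ↔
      (f (posSwap j h p).rev ≤ f (posSwap j h q).rev → q ≤ p) := fun p q => by
    rw [swapEnt_rev, swapEnt_rev, Fin.rev_le_rev]
  rw [isSYT_iff hdec]
  constructor
  · rintro ⟨-, -, hmono⟩ hle
    have := (hswap ⟨j, by omega⟩ ⟨j + 1, h⟩).1 (hmono _ _) (by simpa [posSwap] using hle)
    simp [Fin.le_def] at this
  · refine fun hnle => ⟨hf.1.comp (Equiv.injective _), ?_, fun a b => ?_⟩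
    · rw [← hf.2.1]
      exact (Equiv.surjective _).range_comp f
    · rw [← Fin.rev_rev a, ← Fin.rev_rev b, hswap]
      generalize a.rev = p, b.rev = q
      intro hle
      have hqp := hf.position_le_of_le hdec hle
      by_contra! hpq
      obtain ⟨rfl, rfl⟩ : p = ⟨j, Nat.lt_of_succ_lt h⟩ ∧ q = ⟨j + 1, h⟩ := by
        rw [Fin.le_def, val_posSwap, val_posSwap] at hqp
        rw [Fin.lt_def] at hpq
        simp only [Fin.ext_iff]
        split_ifs at hqp <;> omega
      exact hnle (by simpa [posSwap] using hle)

theorem IsSYT.exists_position_of_le_of_le (hdec : l.Pairwise (· > ·)) (hf : IsSYT l N f)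
    {p q : Fin N} {b : ℕ × ℕ} (hdiag : b.1 ≤ b.2) (hle : f q.rev ≤ b) (hle' : b ≤ f p.rev) :
    ∃ m : Fin N, p ≤ m ∧ m ≤ q ∧ b = f m.rev := by
  obtain ⟨m, rfl⟩ := hf.exists_eq_of_le hdec hle' ((hf.one_le_row _).trans hle.1) hdiag
  rw [← Fin.rev_rev m] at hle hle' ⊢
  exact ⟨m.rev, hf.position_le_of_le hdec hle', hf.position_le_of_le hdec hle, rfl⟩

/-- No other entry fits into a box between the two. -/
theorem IsSYT.eq_right_or_eq_below (hdec : l.Pairwise (· > ·)) (hf : IsSYT l N f) {j : ℕ}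
    (h : j + 1 < N) (hle : f (Fin.rev ⟨j + 1, h⟩) ≤ f (Fin.rev ⟨j, by omega⟩)) :
    f (Fin.rev ⟨j, by omega⟩) =
        ((f (Fin.rev ⟨j + 1, h⟩)).1, (f (Fin.rev ⟨j + 1, h⟩)).2 + 1) ∨
      f (Fin.rev ⟨j, by omega⟩) =
        ((f (Fin.rev ⟨j + 1, h⟩)).1 + 1, (f (Fin.rev ⟨j + 1, h⟩)).2) := by
  have hne : f (Fin.rev ⟨j + 1, h⟩) ≠ f (Fin.rev ⟨j, by omega⟩) :=
    fun he => by simpa using Fin.rev_injective (hf.1 he)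
  have hdiag := hf.row_le_col (Fin.rev ⟨j + 1, h⟩)
  have hdiag' := hf.row_le_col (Fin.rev ⟨j, by omega⟩)
  have hbetween : ∀ b : ℕ × ℕ, b.1 ≤ b.2 → f (Fin.rev ⟨j + 1, h⟩) ≤ b →
      b ≤ f (Fin.rev ⟨j, by omega⟩) →
      b = f (Fin.rev ⟨j + 1, h⟩) ∨ b = f (Fin.rev ⟨j, by omega⟩) := fun b hb hle hle' => by
    obtain ⟨m, hm, hm', rfl⟩ := hf.exists_position_of_le_of_le hdec hb hle hle'
    rcases (show (m : ℕ) = j + 1 ∨ (m : ℕ) = j by simp only [Fin.le_def] at hm hm'; omega)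
      with hm | hm
    · exact .inl (by simp [← hm])
    · exact .inr (by simp [← hm])
  generalize f (Fin.rev ⟨j + 1, h⟩) = b at *
  generalize f (Fin.rev ⟨j, _⟩) = b' at *
  obtain ⟨r, c⟩ := b
  obtain ⟨r', c'⟩ := b'
  simp only [Prod.forall, Prod.mk_le_mk, Prod.mk.injEq, ne_eq] at *
  rcases Nat.lt_or_ge c c' with hc | hc
  · have := hbetween r (c + 1) (by omega) (by omega) (by omega)
    omega
  · have := hbetween (r + 1) c (by omega) (by omega) (by omega)
    omega

theorem IsSYT.lettersAdjacent_of_le (hdec : l.Pairwise (· > ·)) (hn : 0 < n)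
    (hle : ∀ x ∈ l, x ≤ n) (hf : IsSYT l N f) {j : ℕ} (h : j + 1 < N)
    (hcomp : f (Fin.rev ⟨j + 1, h⟩) ≤ f (Fin.rev ⟨j, by omega⟩)) :
    LettersAdjacent (resSeq n hn f ⟨j, by omega⟩) (resSeq n hn f ⟨j + 1, h⟩) := by
  have hdiag := hf.row_le_col (Fin.rev ⟨j + 1, h⟩)
  have hdiag' := hf.row_le_col (Fin.rev ⟨j, by omega⟩)
  rw [LettersAdjacent, val_resSeq hn hle hf, val_resSeq hn hle hf]
  rcases hf.eq_right_or_eq_below hdec h hcomp with heq | heq <;> rw [heq] at hdiag' ⊢ <;>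
    simp only at * <;> omega

theorem IsSYT.lettersCommute_of_not_le (hdec : l.Pairwise (· > ·)) (hn : 0 < n)
    (hle : ∀ x ∈ l, x ≤ n) (hf : IsSYT l N f) {j : ℕ} (h : j + 1 < N)
    (hcomp : ¬f (Fin.rev ⟨j + 1, h⟩) ≤ f (Fin.rev ⟨j, by omega⟩)) :
    LettersCommute (resSeq n hn f ⟨j, by omega⟩) (resSeq n hn f ⟨j + 1, h⟩) := by
  have hcomp' : ¬f (Fin.rev ⟨j, by omega⟩) ≤ f (Fin.rev ⟨j + 1, h⟩) := fun hle' => by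
    simpa [Fin.le_def] using hf.position_le_of_le hdec hle'
  have hdiag := hf.row_le_col (Fin.rev ⟨j + 1, h⟩)
  have hdiag' := hf.row_le_col (Fin.rev ⟨j, by omega⟩)
  rw [Prod.le_def] at hcomp hcomp'
  rw [LettersCommute, LettersAdjacent, val_resSeq hn hle hf, val_resSeq hn hle hf]
  omega

theorem IsSYT.isSYT_swapEnt_iff_lettersCommute (hdec : l.Pairwise (· > ·)) (hn : 0 < n)
    (hle : ∀ x ∈ l, x ≤ n) (hf : IsSYT l N f) {j : ℕ} (h : j + 1 < N) :
    IsSYT l N (swapEnt j h f) ↔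
      LettersCommute (resSeq n hn f ⟨j, by omega⟩) (resSeq n hn f ⟨j + 1, h⟩) := by
  rw [isSYT_swapEnt_iff hdec hf h]
  exact ⟨hf.lettersCommute_of_not_le hdec hn hle h,
    fun hcomm hcomp => hcomm.2 (hf.lettersAdjacent_of_le hdec hn hle h hcomp)⟩

theorem IsSYT.lettersAdjacent_of_not_lettersCommute (hdec : l.Pairwise (· > ·)) (hn : 0 < n)
    (hle : ∀ x ∈ l, x ≤ n) (hf : IsSYT l N f) {j : ℕ} (h : j + 1 < N)
    (hcomm : ¬LettersCommute (resSeq n hn f ⟨j, by omega⟩) (resSeq n hn f ⟨j + 1, h⟩)) :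
    LettersAdjacent (resSeq n hn f ⟨j, by omega⟩) (resSeq n hn f ⟨j + 1, h⟩) :=
  hf.lettersAdjacent_of_le hdec hn hle h
    (of_not_not fun hcomp => hcomm (hf.lettersCommute_of_not_le hdec hn hle h hcomp))

/-- Two boxes on one diagonal which are at distance two have both a box above the diagonal and,
unless the diagonal is the main one, a box below it between them, so that they do not carry
entries with difference two. -/
theorem IsSYT.resSeq_eq_zero_of_adjacent (hdec : l.Pairwise (· > ·)) (hn : 0 < n)
    (hle : ∀ x ∈ l, x ≤ n) (hf : IsSYT l N f) {j : ℕ} (h : j + 2 < N)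
    (hadj : LettersAdjacent (resSeq n hn f ⟨j, by omega⟩) (resSeq n hn f ⟨j + 1, by omega⟩))
    (heq : resSeq n hn f ⟨j, by omega⟩ = resSeq n hn f ⟨j + 2, h⟩) :
    (resSeq n hn f ⟨j, by omega⟩ : ℕ) = 0 := by
  have hle₁ := of_not_not fun hcomp =>
    (hf.lettersCommute_of_not_le hdec hn hle (show j + 1 < N by omega) hcomp).2 hadj
  have hle₂ := of_not_not fun hcomp =>
    (hf.lettersCommute_of_not_le hdec hn hle (show j + 1 + 1 < N by omega) hcomp).2
      (heq ▸ hadj.symm)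
  have hcover₁ := hf.eq_right_or_eq_below hdec (show j + 1 < N by omega) hle₁
  have hcover₂ := hf.eq_right_or_eq_below hdec (show j + 1 + 1 < N by omega) hle₂
  have hdiag₀ := hf.row_le_col (Fin.rev ⟨j, by omega⟩)
  have hdiag₂ := hf.row_le_col (Fin.rev ⟨j + 2, h⟩)
  have hbetween : ∀ b : ℕ × ℕ, b.1 ≤ b.2 → f (Fin.rev ⟨j + 2, h⟩) ≤ b →
      b ≤ f (Fin.rev ⟨j, by omega⟩) → b = f (Fin.rev ⟨j + 2, h⟩) ∨
      b = f (Fin.rev ⟨j + 1, by omega⟩) ∨ b = f (Fin.rev ⟨j, by omega⟩) := fun b hb hle hle' => by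
    obtain ⟨m, hm, hm', rfl⟩ := hf.exists_position_of_le_of_le hdec hb hle hle'
    rcases (show (m : ℕ) = j + 2 ∨ (m : ℕ) = j + 1 ∨ (m : ℕ) = j by
      simp only [Fin.le_def] at hm hm'; omega) with hm | hm | hm
    · exact .inl (by simp [← hm])
    · exact .inr (.inl (by simp [← hm]))
    · exact .inr (.inr (by simp [← hm]))
  rw [Fin.ext_iff, val_resSeq hn hle hf, val_resSeq hn hle hf] at heq
  rw [val_resSeq hn hle hf]
  generalize f (Fin.rev ⟨j, _⟩) = b₀, f (Fin.rev ⟨j + 1, _⟩) = b₁,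
    f (Fin.rev ⟨j + 2, _⟩) = b₂ at *
  obtain ⟨r, c⟩ := b₂
  have hright := hbetween (r, c + 1)
  have hbelow := hbetween (r + 1, c)
  rcases hcover₂ with rfl | rfl <;> rcases hcover₁ with rfl | rfl <;>
    simp only [Prod.mk_le_mk, Prod.mk.injEq] at * <;> omega

theorem IsSYT.resSeq_last_eq_zero (hdec : l.Pairwise (· > ·)) (hn : 0 < n)
    (hle : ∀ x ∈ l, x ≤ n) (hf : IsSYT l N f) {p : Fin N} (hp : (p : ℕ) + 1 = N) :
    (resSeq n hn f p : ℕ) = 0 := by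
  have hdiag := hf.row_le_col p.rev
  have hrow := hf.one_le_row p.rev
  obtain ⟨m, hm⟩ := hf.exists_eq_of_le hdec (b := (1, 1)) (a := p.rev)
    ⟨hrow, hrow.trans hdiag⟩ le_rfl le_rfl
  have hmp : m = p.rev := by
    have := hf.le_of_le hdec (a := m) (b := p.rev) (hm ▸ ⟨hrow, hrow.trans hdiag⟩)
    rw [Fin.le_def, Fin.val_rev] at this
    exact Fin.ext (by rw [Fin.val_rev]; omega)
  simp [val_resSeq hn hle hf, ← hmp, hm]

/-- The box of the first entry on which two tableaux with the same residues differ would have to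
come first on its diagonal in both of them. -/
theorem IsSYT.eq_of_resSeq_eq (hdec : l.Pairwise (· > ·)) (hn : 0 < n)
    (hle : ∀ x ∈ l, x ≤ n) (hf : IsSYT l N f) (hg : IsSYT l N g)
    (h : resSeq n hn f = resSeq n hn g) : f = g := by
  have hnle : ∀ {f g : Fin N → ℕ × ℕ} {a : Fin N}, IsSYT l N f → IsSYT l N g →
      (∀ b < a, f b = g b) → f a ≤ g a → f a = g a := fun {f g a} hf hg ih hcomp => by
    obtain ⟨m, hm⟩ := hg.exists_eq_of_le hdec hcomp (hf.one_le_row a) (hf.row_le_col a)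
    rcases (hg.le_of_le hdec (hm ▸ hcomp)).lt_or_eq with hlt | rfl
    · exact absurd (hf.1 ((ih m hlt).trans hm)) hlt.ne
    · exact hm.symm
  funext a
  induction a using WellFoundedLT.induction with
  | ind a ih =>
    have hres : (f a).2 - (f a).1 = (g a).2 - (g a).1 := by
      have := congrArg Fin.val (congrFun h a.rev)
      rwa [val_resSeq hn hle hf, val_resSeq hn hle hg, Fin.rev_rev] at this
    have hdiag := hf.row_le_col a
    have hdiag' := hg.row_le_col a
    rcases le_total (f a).1 (g a).1 with hrow | hrow
    · exact hnle hf hg ih ⟨hrow, by omega⟩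
    · exact (hnle hg hf (fun b hb => (ih b hb).symm) ⟨hrow, by omega⟩).symm

theorem permTab.apply_rev {σ : Equiv.Perm (Fin N)} (h : permTab σ f g) (p : Fin N) :
    g (σ⁻¹ p).rev = f p.rev := by
  simpa using h (σ⁻¹ p).rev

theorem permTab_one_iff : permTab 1 f g ↔ f = g :=
  ⟨fun h => funext fun a => by simpa using (h a).symm, fun h a => by simp [h]⟩

theorem permTab_posSwap_mul_iff {σ : Equiv.Perm (Fin N)} {j : ℕ} (h : j + 1 < N) :
    permTab (posSwap j h * σ) f g ↔ permTab σ (swapEnt j h f) g := by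
  simp only [permTab, swapEnt_rev, Equiv.Perm.mul_apply]

theorem permTab_injective (hf : Function.Injective f) {σ σ' : Equiv.Perm (Fin N)}
    (h : permTab σ f g) (h' : permTab σ' f g) : σ = σ' := by
  ext p
  have hp := (h p.rev).symm.trans (h' p.rev)
  rw [Fin.rev_rev] at hp
  rw [Fin.rev_injective (hf hp)]

theorem IsSYT.exists_permTab (hf : IsSYT l N f) (hg : IsSYT l N g) :
    ∃ σ : Equiv.Perm (Fin N), permTab σ f g := by
  have hex : ∀ p : Fin N, ∃ q, f q = g p.rev := fun p => by
    have := hg.mem_diagram p.rev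
    rwa [← hf.2.1] at this
  choose φ hφ using hex
  have hinj : Function.Injective fun p => (φ p).rev := fun p q hpq =>
    Fin.rev_injective (hg.1 (by rw [← hφ, ← hφ, Fin.rev_injective hpq]))
  exact ⟨Equiv.ofBijective _ (Finite.injective_iff_bijective.1 hinj), fun a => by simp [hφ]⟩

theorem IsSYT.isSYT_swapEnt_of_isDescent (hdec : l.Pairwise (· > ·)) (hf : IsSYT l N f)
    (hg : IsSYT l N g) {σ : Equiv.Perm (Fin N)} (h : permTab σ f g) {j : ℕ} {hj : j + 1 < N}
    (hσ : IsDescent σ j hj) : IsSYT l N (swapEnt j hj f) := by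
  rw [isSYT_swapEnt_iff hdec hf]
  intro hcomp
  rw [← h.apply_rev, ← h.apply_rev] at hcomp
  exact hσ.not_ge (hg.position_le_of_le hdec hcomp)

end Tableaux

section ResidueSequences

variable {n N : ℕ} {l : List ℕ}

theorem sum_ite_val_eq {ι : Type*} (s : Finset ι) (φ : ι → Fin n) (m : ℕ) (c : ℤ) :
    ∑ b ∈ s, (if (φ b : ℕ) = m then c else 0) = c * (s.filter fun b => (φ b : ℕ) = m).card := by
  rw [← Finset.sum_filter, Finset.sum_const, nsmul_eq_mul, mul_comm]

theorem sum_αcol_apply {ι : Type*} (s : Finset ι) (φ : ι → Fin n) (m : Fin n) :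
    (∑ b ∈ s, αcol (AB n) (φ b)) m =
      2 * (s.filter fun b => (φ b : ℕ) = m).card -
        (if (m : ℕ) = 0 then 2 else 1) * (s.filter fun b => (φ b : ℕ) = m + 1).card -
        if (m : ℕ) = 0 then 0 else ((s.filter fun b => (φ b : ℕ) = m - 1).card : ℤ) := by
  have hentry : ∀ i : Fin n, αcol (AB n) i m =
      (if (i : ℕ) = m then 2 else 0) +
        (if (i : ℕ) = m + 1 then -(if (m : ℕ) = 0 then 2 else 1) else 0) +
        (if (i : ℕ) = m - 1 then if (m : ℕ) = 0 then 0 else -1 else 0) := fun i => by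
    simp only [αcol, AB, Fin.ext_iff]
    split_ifs <;> omega
  simp only [Finset.sum_apply, hentry, Finset.sum_add_distrib, sum_ite_val_eq]
  split_ifs <;> ring

theorem card_filter_eq_of_sum_αcol_eq {ι κ : Type*} {s : Finset ι} {φ : ι → Fin n}
    {t : Finset κ} {ψ : κ → Fin n}
    (h : ∑ b ∈ s, αcol (AB n) (φ b) = ∑ b ∈ t, αcol (AB n) (ψ b)) (m : ℕ) :
    (s.filter fun b => (φ b : ℕ) = m).card = (t.filter fun b => (ψ b : ℕ) = m).card := by
  set D : ℕ → ℤ := fun m => (s.filter fun b => (φ b : ℕ) = m).card -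
    (t.filter fun b => (ψ b : ℕ) = m).card with hD
  have hlarge : ∀ m, n ≤ m → D m = 0 := fun m hm => by
    simp [hD, fun i : Fin n => (i.2.trans_le hm).ne]
  have hrec : ∀ m < n, 2 * D m = (if m = 0 then 2 else 1) * D (m + 1) +
      if m = 0 then 0 else D (m - 1) := fun m hm => by
    have := congrFun h ⟨m, hm⟩
    rw [sum_αcol_apply, sum_αcol_apply] at this
    simp only [hD] at *
    split_ifs at * <;> linarith
  have hconst : ∀ m < n, D m = D (m + 1) := fun m => by
    induction m with
    | zero => exact fun hm => by simpa using hrec 0 hm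
    | succ m ih =>
      intro hm
      have := hrec (m + 1) hm
      rw [if_neg m.succ_ne_zero, if_neg m.succ_ne_zero, Nat.add_sub_cancel,
        ih (by omega)] at this
      linarith
  have hzero : D m = 0 := by
    rcases Nat.le_total n m with hm | hm
    · exact hlarge m hm
    · induction hm using Nat.decreasingInduction with
      | self => exact hlarge n le_rfl
      | of_succ m hm ih => rw [hconst m hm, ih]
  simp only [hD] at hzero
  omega

theorem mem_diagFinset {b : ℕ × ℕ} : b ∈ diagFinset l ↔ b ∈ diagram l := by
  simp only [diagFinset, diagram, Finset.mem_biUnion, Finset.mem_range, Finset.mem_image,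
    Finset.mem_Icc, Set.mem_ofPred_eq]
  constructor
  · rintro ⟨i, hi, c, hc, rfl⟩
    simp only [Nat.add_sub_cancel]
    omega
  · rintro ⟨hlen, hrow, hdiag, hcol⟩
    exact ⟨b.1 - 1, hlen, b.2, by omega, Prod.ext (by simp only; omega) rfl⟩

theorem mem_Iβ_wtP_iff (hn : 0 < n) {ν : Fin N → Fin n} :
    ν ∈ Iβ (AB n) (Pi.single ⟨0, hn⟩ 1) (wtP n hn l) N ↔
      ∑ p : Fin N, αcol (AB n) (ν p) = ∑ b ∈ diagFinset l, αcol (AB n) (resFin n hn b) := by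
  have hdiff : ∀ μ δ : Fin n → ℤ, (fun i => μ i - (μ - δ) i) = δ := fun μ δ => by
    ext i
    simp
  rw [Iβ, wtP, Set.mem_ofPred_eq, hdiff]

theorem IsSYT.resSeq_mem_Iβ (hn : 0 < n) {f : Fin N → ℕ × ℕ} (hf : IsSYT l N f) :
    resSeq n hn f ∈ Iβ (AB n) (Pi.single ⟨0, hn⟩ 1) (wtP n hn l) N := by
  rw [mem_Iβ_wtP_iff]
  refine Finset.sum_bij (fun p _ => f p.rev) (fun p _ => mem_diagFinset.2 (hf.mem_diagram _))
    (fun p _ q _ h => Fin.rev_injective (hf.1 h)) (fun b hb => ?_) fun p _ => rfl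
  rw [mem_diagFinset, ← hf.2.1] at hb
  obtain ⟨a, rfl⟩ := hb
  exact ⟨a.rev, Finset.mem_univ _, by rw [Fin.rev_rev]⟩

theorem mem_iff_lt_card_of_isLowerSet {s : Finset ℕ} (hs : IsLowerSet (s : Set ℕ)) {t : ℕ} :
    t ∈ s ↔ t < s.card := by
  constructor
  · intro ht
    rw [← Nat.succ_le_iff, ← Finset.card_range t.succ]
    exact Finset.card_le_card fun r hr => hs (Nat.lt_succ_iff.1 (Finset.mem_range.1 hr)) ht
  · intro ht
    by_contra hts
    rw [← Finset.card_range t] at ht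
    refine ht.not_ge (Finset.card_le_card fun r hr => Finset.mem_range.2 ?_)
    by_contra! htr
    exact hts (hs htr hr)

theorem mem_diagram_iff_lt_card (hdec : l.Pairwise (· > ·)) (hn : 0 < n) (hle : ∀ x ∈ l, x ≤ n)
    (i t : ℕ) : (t + 1, t + 1 + i) ∈ diagram l ↔
      t < ((diagFinset l).filter fun b => (resFin n hn b : ℕ) = i).card := by
  set s := (diagFinset l).filter fun b => (resFin n hn b : ℕ) = i with hs
  have hmem : ∀ b, b ∈ s ↔ b ∈ diagram l ∧ b.2 - b.1 = i := fun b => by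
    rw [hs, Finset.mem_filter, mem_diagFinset]
    exact and_congr_right fun hb => by rw [val_resFin hn hle hb]
  have hinj : Set.InjOn (fun b : ℕ × ℕ => b.1 - 1) s := fun b hb b' hb' hbb' => by
    rw [Finset.mem_coe, hmem] at hb hb'
    obtain ⟨⟨-, hrow, hdiag, -⟩, hi⟩ := hb
    obtain ⟨⟨-, hrow', hdiag', -⟩, hi'⟩ := hb'
    simp only at hbb'
    exact Prod.ext (by omega) (by omega)
  have himage : ∀ t, t ∈ s.image (fun b => b.1 - 1) ↔ (t + 1, t + 1 + i) ∈ diagram l := fun t => by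
    simp only [Finset.mem_image, hmem]
    constructor
    · rintro ⟨b, ⟨hb, rfl⟩, rfl⟩
      obtain ⟨-, hrow, hdiag, -⟩ := id hb
      rwa [Nat.sub_add_cancel hrow, Nat.add_sub_cancel' hdiag]
    · exact fun h => ⟨_, ⟨h, by simp⟩, rfl⟩
  rw [← Finset.card_image_of_injOn hinj, ← himage]
  refine mem_iff_lt_card_of_isLowerSet fun t r hr ht => ?_
  rw [Finset.mem_coe, himage] at ht ⊢
  exact mem_diagram_of_le hdec ht ⟨by simp only; omega, by simp only; omega⟩ (by simp) (by simp)

theorem lt_letterCount_iff_mem_diagram (hdec : l.Pairwise (· > ·)) (hn : 0 < n)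
    (hle : ∀ x ∈ l, x ≤ n) {ν : Fin N → Fin n}
    (hν : ν ∈ Iβ (AB n) (Pi.single ⟨0, hn⟩ 1) (wtP n hn l) N) (i t : ℕ) :
    t < letterCount ν 0 i ↔ (t + 1, t + 1 + i) ∈ diagram l := by
  rw [mem_diagram_iff_lt_card hdec hn hle,
    ← card_filter_eq_of_sum_αcol_eq ((mem_Iβ_wtP_iff hn).1 hν)]
  simp only [letterCount, Nat.zero_le, true_and]

theorem letterCount_le_add_sub (ν : Fin N → Fin n) {s : ℕ} (hs : s ≤ N)
    (hν : ∀ p : Fin N, s ≤ p → IsAddableAt ν p) {i j : ℕ} (hij : i ≤ j) :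
    letterCount ν s j ≤ letterCount ν s i ∧
      letterCount ν s i ≤ letterCount ν s j + (j - i) := by
  induction j, hij using Nat.le_induction with
  | base => simp
  | succ j hij ih =>
    have := letterCount_interlace ν hs hν j
    omega

/-- The tableau built from a sequence `ν` by reading it from right to left and placing each letter
`i` in the first empty box of the `i`-th diagonal. -/
def tableauOfSeq (ν : Fin N → Fin n) (a : Fin N) : ℕ × ℕ :=
  (letterCount ν (a.rev + 1) (ν a.rev) + 1, letterCount ν (a.rev + 1) (ν a.rev) + 1 + ν a.rev)

theorem resSeq_tableauOfSeq (hn : 0 < n) (ν : Fin N → Fin n) :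
    resSeq n hn (tableauOfSeq ν) = ν := by
  funext p
  simp only [resSeq, tableauOfSeq, resFin, Fin.rev_rev, Fin.ext_iff]
  omega

theorem injective_tableauOfSeq (ν : Fin N → Fin n) : Function.Injective (tableauOfSeq ν) := by
  intro a b hab
  simp only [tableauOfSeq, Prod.mk.injEq] at hab
  obtain ⟨hcount, hletter⟩ := hab
  have hν : (ν a.rev : ℕ) = ν b.rev := by omega
  rw [hν] at hcount
  apply Fin.rev_injective
  rcases lt_trichotomy a.rev b.rev with hlt | heq | hlt
  · have := letterCount_succ_lt ν (s := a.rev + 1) hlt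
    omega
  · exact heq
  · have := letterCount_succ_lt ν (s := b.rev + 1) hlt
    rw [hν] at this
    omega

theorem range_tableauOfSeq {ν : Fin N → Fin n}
    (hν : ∀ i t, t < letterCount ν 0 i ↔ (t + 1, t + 1 + i) ∈ diagram l) :
    Set.range (tableauOfSeq ν) = diagram l := by
  ext ⟨r, c⟩
  constructor
  · rintro ⟨a, ha⟩
    rw [← ha]
    exact (hν _ _).1 (letterCount_succ_lt ν (Nat.zero_le _))
  · intro hb
    obtain ⟨-, hrow, hdiag, -⟩ := id hb
    simp only at hrow hdiag
    obtain ⟨p, -, hp, hcount⟩ := exists_letterCount_succ_eq ν (Nat.zero_le N)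
      ((hν (c - r) (r - 1)).2 (by rwa [Nat.sub_add_cancel hrow, Nat.add_sub_cancel' hdiag]))
    refine ⟨p.rev, ?_⟩
    simp only [tableauOfSeq, Fin.rev_rev, hp, hcount, Prod.mk.injEq]
    omega

theorem isSYT_tableauOfSeq {ν : Fin N → Fin n} (hadd : ∀ p, IsAddableAt ν p)
    (hν : ∀ i t, t < letterCount ν 0 i ↔ (t + 1, t + 1 + i) ∈ diagram l) :
    IsSYT l N (tableauOfSeq ν) := by
  have hanti : ∀ {a b : Fin N}, b ≤ a → ∀ i,
      letterCount ν (b.rev + 1) i ≤ letterCount ν (a.rev + 1) i := fun hba =>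
    letterCount_anti ν (Nat.succ_le_succ (Fin.rev_le_rev.2 hba))
  have hinter : ∀ (b : Fin N) {i j : ℕ}, i ≤ j →
      letterCount ν (b.rev + 1) j ≤ letterCount ν (b.rev + 1) i ∧
        letterCount ν (b.rev + 1) i ≤ letterCount ν (b.rev + 1) j + (j - i) := fun b _ _ =>
    letterCount_le_add_sub ν b.rev.2 fun p _ => hadd p
  refine ⟨injective_tableauOfSeq ν, range_tableauOfSeq hν, fun a b hrow hcol => ?_,
    fun a b hcol hrow => ?_⟩ <;>
    simp only [tableauOfSeq] at hrow hcol <;> by_contra! hba <;>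
    have hadd := hadd b.rev <;> simp only [IsAddableAt, IsAddable] at hadd <;>
    have hcount := hanti hba (ν a.rev)
  · have hchain := hinter b (show (ν a.rev : ℕ) ≤ ν b.rev - 1 by omega)
    omega
  · have hchain := hinter b (show (ν b.rev + 1 : ℕ) ≤ ν a.rev by omega)
    omega

theorem exists_isSYT_resSeq_eq (hdec : l.Pairwise (· > ·)) (hn : 0 < n) (hle : ∀ x ∈ l, x ≤ n)
    {ν : Fin N → Fin n} (hν : ν ∈ Iβ (AB n) (Pi.single ⟨0, hn⟩ 1) (wtP n hn l) N)
    (hadd : ∀ p, IsAddableAt ν p) : ∃ f, IsSYT l N f ∧ resSeq n hn f = ν :=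
  ⟨tableauOfSeq ν, isSYT_tableauOfSeq hadd (lt_letterCount_iff_mem_diagram hdec hn hle hν),
    resSeq_tableauOfSeq hn ν⟩

end ResidueSequences

section TableauRelations

/-- The defining relations of `R^{Λ₁}(ξ)`, where `ξ` is the weight of the shifted shape `l`, on
residue sequences of length `N`. -/
abbrev ShapeRel {k : Type} [Field k] {n : ℕ} (Q : Fin n → Fin n → MvPolynomial (Fin 2) k)
    (l : List ℕ) (hn : 0 < n) (N : ℕ) : FA k n N → FA k n N → Prop :=
  CRel k Q (Iβ (AB n) (Pi.single ⟨0, hn⟩ 1) (wtP n hn l) N) (Pi.single ⟨0, hn⟩ 1)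

/-- The relations satisfied by the cyclotomic quiver Hecke algebra of the shifted shape `l`, stated
for an algebra map `φ` out of the free algebra. -/
structure TableauRels {k : Type} [Field k] {A : Type} [Ring A] [Algebra k A] {n N : ℕ}
    (l : List ℕ) (hn : 0 < n) (φ : FA k n N →ₐ[k] A) : Prop
    extends IdempotentRels (fun ν => φ (Eg k ν)) (fun j h => φ (Tg k j h)) where
  x_eq_zero : ∀ p, φ (Xg k p) = 0
  e_eq_zero : ∀ ν, (¬∃ f, IsSYT l N f ∧ resSeq n hn f = ν) → φ (Eg k ν) = 0
  t_mul_t_mul_e : ∀ j h ν, LettersCommute (ν ⟨j, by omega⟩) (ν ⟨j + 1, h⟩) →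
    φ (Tg k j h) * φ (Tg k j h) * φ (Eg k ν) = φ (Eg k ν)
  t_mul_e_eq_zero : ∀ j h ν, ¬LettersCommute (ν ⟨j, by omega⟩) (ν ⟨j + 1, h⟩) →
    φ (Tg k j h) * φ (Eg k ν) = 0
  braid : ∀ j (h1 : j + 1 < N) (h2 : j + 2 < N),
    φ (Tg k (j + 1) h2) * φ (Tg k j h1) * φ (Tg k (j + 1) h2) =
      φ (Tg k j h1) * φ (Tg k (j + 1) h2) * φ (Tg k j h1)

variable {k : Type} [Field k] {A : Type} [Ring A] [Algebra k A] {n N : ℕ} {l : List ℕ}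
  {Q : Fin n → Fin n → MvPolynomial (Fin 2) k} {φ : FA k n N →ₐ[k] A}

theorem IdempotentRels.eq_of_mul_e {E : (Fin N → Fin n) → A} {T : (j : ℕ) → j + 1 < N → A}
    (R : IdempotentRels E T) {a b : A} (h : ∀ ν, a * E ν = b * E ν) : a = b := by
  rw [← mul_one a, ← mul_one b, ← R.sum_e, Finset.mul_sum, Finset.mul_sum]
  exact Finset.sum_congr rfl fun ν _ => h ν

theorem IsSYT.resSeq_ne (hdec : l.Pairwise (· > ·)) (hn : 0 < n) (hle : ∀ x ∈ l, x ≤ n)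
    {f : Fin N → ℕ × ℕ} (hf : IsSYT l N f) {j : ℕ} (h : j + 1 < N) :
    resSeq n hn f ⟨j, by omega⟩ ≠ resSeq n hn f ⟨j + 1, h⟩ := by
  intro heq
  by_cases hcomm : LettersCommute (resSeq n hn f ⟨j, by omega⟩) (resSeq n hn f ⟨j + 1, h⟩)
  · exact hcomm.1 (congrArg Fin.val heq)
  · have hadj := hf.lettersAdjacent_of_not_lettersCommute hdec hn hle h hcomm
    rw [heq] at hadj
    obtain hadj | hadj := hadj <;> omega

theorem IsSYT.eval3_Qbar_resSeq_mul_eq_zero (hQ : QAdmissible k (AB n) (dB n) Q)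
    (hdec : l.Pairwise (· > ·)) (hn : 0 < n) (hle : ∀ x ∈ l, x ≤ n) {f : Fin N → ℕ × ℕ}
    (hf : IsSYT l N f) {j : ℕ} (h : j + 2 < N)
    (heq : resSeq n hn f ⟨j, by omega⟩ = resSeq n hn f ⟨j + 2, h⟩) {x y z a : A}
    (hx : x * a = 0) (hz : z * a = 0) :
    eval3 k (Qbar k (Q (resSeq n hn f ⟨j, by omega⟩) (resSeq n hn f ⟨j + 1, by omega⟩))) x y z *
      a = 0 := by
  by_cases hcomm : LettersCommute (resSeq n hn f ⟨j, by omega⟩) (resSeq n hn f ⟨j + 1, by omega⟩)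
  · rw [hQ.eval3_Qbar_eq_zero hcomm, zero_mul]
  · have hadj := hf.lettersAdjacent_of_not_lettersCommute hdec hn hle (by omega) hcomm
    obtain ⟨t, -, ht⟩ := hQ.exists_eval3_Qbar_eq_of_eq_zero hadj
      (hf.resSeq_eq_zero_of_adjacent hdec hn hle h hadj heq) x y z
    rw [ht, mul_assoc, add_mul, hx, hz, add_zero, mul_zero]

theorem tableauRels_of_map_eq (hQ : QAdmissible k (AB n) (dB n) Q) (hdec : l.Pairwise (· > ·))
    (hn : 0 < n) (hle : ∀ x ∈ l, x ≤ n)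
    (hφ : ∀ a b, ShapeRel Q l hn N a b → φ a = φ b) :
    TableauRels l hn φ := by
  have R := cyclotomicRels_of_map_eq hn φ hφ
  have hx : ∀ p, φ (Xg k p) = 0 := fun p => R.eq_of_mul_e fun ν => by
    rw [zero_mul]
    exact R.x_mul_e hQ p ν
  have he : ∀ ν, φ (Eg k ν) ≠ 0 → ∃ f, IsSYT l N f ∧ resSeq n hn f = ν := fun ν hν =>
    exists_isSYT_resSeq_eq hdec hn hle (of_not_not fun hS => hν (R.e_of_notMem ν hS))
      (R.isAddableAt_of_e_ne_zero hQ hν)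
  refine ⟨R.toIdempotentRels, hx, fun ν hν => by_contra fun h => hν (he ν h),
    fun j h ν hcomm => R.t_mul_t_mul_e_of_commute hQ h hcomm, fun j h ν hcomm => ?_,
    fun j h1 h2 => R.eq_of_mul_e fun ν => ?_⟩
  · by_contra hne
    have hν : φ (Eg k ν) ≠ 0 := right_ne_zero_of_mul hne
    rw [R.t_mul_e] at hne
    obtain ⟨f, hf, rfl⟩ := he ν hν
    exact (R.isAddableAt_of_e_ne_zero hQ hν ⟨j + 1, h⟩).not_isAddableAt_swapSeq
      (hf.lettersAdjacent_of_not_lettersCommute hdec hn hle h hcomm)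
      (R.isAddableAt_of_e_ne_zero hQ (left_ne_zero_of_mul hne) _)
  · by_cases hν : φ (Eg k ν) = 0
    · simp only [hν, mul_zero]
    obtain ⟨f, hf, rfl⟩ := he ν hν
    by_cases heq : resSeq n hn f ⟨j, by omega⟩ = resSeq n hn f ⟨j + 2, h2⟩
    · rw [R.braid_of_eq j h1 h2 _ heq,
        hf.eval3_Qbar_resSeq_mul_eq_zero hQ hdec hn hle h2 heq (R.x_mul_e hQ _ _)
          (R.x_mul_e hQ _ _), add_zero]
    · exact R.braid_of_ne j h1 h2 _ heq

namespace TableauRels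

variable {hn : 0 < n} (R : TableauRels l hn φ)
include R

theorem map_eq_of_rel (hQ : QAdmissible k (AB n) (dB n) Q) (hdec : l.Pairwise (· > ·))
    (hle : ∀ x ∈ l, x ≤ n) {a b : FA k n N}
    (h : Rel k Q (Iβ (AB n) (Pi.single ⟨0, hn⟩ 1) (wtP n hn l) N) a b) : φ a = φ b := by
  have he : ∀ ν, φ (Eg k ν) = 0 ∨ ∃ f, IsSYT l N f ∧ resSeq n hn f = ν := fun ν =>
    or_iff_not_imp_right.2 (R.e_eq_zero ν)
  have he_eq : ∀ {j : ℕ} (h : j + 1 < N) {ν : Fin N → Fin n},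
      ν ⟨j, by omega⟩ = ν ⟨j + 1, h⟩ → φ (Eg k ν) = 0 := fun {j} h {ν} hν =>
    (he ν).resolve_right fun ⟨_, hf, hfν⟩ => hf.resSeq_ne hdec hn hle h (by rwa [hfν])
  cases h with
  | e_orth ν ν' hne => simpa using R.e_mul_e_of_ne ν ν' hne
  | e_idem ν => simpa using R.e_mul_e ν
  | e_sum => simpa using R.sum_e
  | e_out ν hν =>
    simpa using R.e_eq_zero ν fun ⟨f, hf, hfν⟩ => hν (hfν ▸ hf.resSeq_mem_Iβ hn)
  | xx p q => simp only [map_mul, R.x_eq_zero]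
  | xe p ν => simp only [map_mul, R.x_eq_zero, mul_zero, zero_mul]
  | te j h ν => simpa using R.t_mul_e j h ν
  | tt a ha b hb hab => simpa using R.t_mul_t a ha b hb hab
  | tsq j h ν =>
    rw [map_mul, map_mul, map_mul, map_eval2, R.x_eq_zero, R.x_eq_zero]
    by_cases hcomm : LettersCommute (ν ⟨j, by omega⟩) (ν ⟨j + 1, h⟩)
    · rw [R.t_mul_t_mul_e j h ν hcomm, hQ.eq_one hcomm, eval2_one, one_mul]
    · rw [mul_assoc, R.t_mul_e_eq_zero j h ν hcomm, mul_zero]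
      obtain h0 | ⟨f, hf, rfl⟩ := he ν
      · rw [h0, mul_zero]
      · obtain ⟨t, t', s, -, heval⟩ := hQ.exists_eval2_eq
          (hf.lettersAdjacent_of_not_lettersCommute hdec hn hle h hcomm) (0 : A) 0
        rw [heval]
        split_ifs <;> simp
  | tx_left j h ν hν =>
    simp only [map_mul, map_sub, R.x_eq_zero, he_eq h hν, mul_zero, sub_zero]
  | tx_right j h ν hν =>
    simp only [map_mul, map_add, R.x_eq_zero, he_eq h hν, mul_zero, add_zero]
  | tx_comm j h ν p hν => simp only [map_mul, R.x_eq_zero, mul_zero, zero_mul]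
  | braid_ne j h1 h2 ν hν => simp only [map_mul, R.braid j h1 h2]
  | braid_eq j h1 h2 ν hν =>
    simp only [map_mul, map_add, map_eval3, R.x_eq_zero, R.braid j h1 h2, left_eq_add]
    obtain h0 | ⟨f, hf, rfl⟩ := he ν
    · rw [h0, mul_zero]
    · exact hf.eval3_Qbar_resSeq_mul_eq_zero hQ hdec hn hle h2 hν (zero_mul _) (zero_mul _)

theorem map_eq_of_cycRel (hdec : l.Pairwise (· > ·)) (hle : ∀ x ∈ l, x ≤ n)
    {S : Set (Fin N → Fin n)} {a b : FA k n N}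
    (h : CycRel k (Pi.single ⟨0, hn⟩ 1) S a b) : φ a = φ b := by
  obtain ⟨ν, hν, p, hp⟩ := h
  rw [map_mul, map_pow, map_zero, R.x_eq_zero]
  by_cases he : ∃ f, IsSYT l N f ∧ resSeq n hn f = ν
  · obtain ⟨f, hf, rfl⟩ := he
    rw [show resSeq n hn f p = ⟨0, hn⟩ from Fin.ext (hf.resSeq_last_eq_zero hdec hn hle hp)]
    simp
  · rw [R.e_eq_zero ν he, mul_zero]

theorem map_eq_of_shapeRel (hQ : QAdmissible k (AB n) (dB n) Q) (hdec : l.Pairwise (· > ·))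
    (hle : ∀ x ∈ l, x ≤ n) {a b : FA k n N} (h : ShapeRel Q l hn N a b) : φ a = φ b :=
  h.elim (R.map_eq_of_rel hQ hdec hle) (R.map_eq_of_cycRel hdec hle)

end TableauRels

end TableauRelations

section TableauElements

variable {k : Type} [Field k] {A : Type} [Ring A] [Algebra k A] {n N : ℕ} {l : List ℕ}
  {φ : FA k n N →ₐ[k] A}

/-- The lift to the free algebra of the element `c_{T,S} = e(res(T)) τ_w e(res(S))`, for a word
`w`. -/
noncomputable def tableauElt (k : Type) [Field k] {n N : ℕ} (hn : 0 < n) (f g : Fin N → ℕ × ℕ)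
    (w : Word N) : FA k n N :=
  Eg k (resSeq n hn f) * tauWord k N w * Eg k (resSeq n hn g)

theorem tauWord_nil : tauWord k N [] = (1 : FA k n N) := rfl

theorem tauWord_cons (a : {j : ℕ // j + 1 < N}) (w : Word N) :
    tauWord k N (a :: w) = (Tg k a.1 a.2 * tauWord k N w : FA k n N) :=
  List.prod_cons

theorem tauWord_append_singleton (w : Word N) (a : {j : ℕ // j + 1 < N}) :
    tauWord k N (w ++ [a]) = (tauWord k N w * Tg k a.1 a.2 : FA k n N) := by
  simp only [tauWord, List.map_append, List.prod_append, List.map_singleton, List.prod_singleton]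

theorem swapSeq_involutive {j : ℕ} (h : j + 1 < N) :
    Function.Involutive (swapSeq j h : (Fin N → Fin n) → Fin N → Fin n) :=
  fun ν => funext fun p => congrArg ν (posSwap_posSwap h p)

/-- The span of the elements `e(res(T)) τ_w`, for `T` standard and `w` an arbitrary word. -/
def standardWordSpan (l : List ℕ) (hn : 0 < n) (φ : FA k n N →ₐ[k] A) : Submodule k A :=
  Submodule.span k
    {y | ∃ f w, IsSYT l N f ∧ φ (Eg k (resSeq n hn f)) * φ (tauWord k N w) = y}

namespace IdempotentRels

theorem e_mul_t {E : (Fin N → Fin n) → A} {T : (j : ℕ) → j + 1 < N → A}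
    (R : IdempotentRels E T) {j : ℕ} (h : j + 1 < N) (ν : Fin N → Fin n) :
    E ν * T j h = T j h * E (swapSeq j h ν) := by
  rw [R.t_mul_e, swapSeq_involutive h ν]

variable (R : IdempotentRels (fun ν => φ (Eg k ν)) (fun j h => φ (Tg k j h)))
include R

theorem map_e_mul_tauWord (hn : 0 < n) {w : Word N} {f g : Fin N → ℕ × ℕ}
    (h : permTab (wordProd N w) f g) :
    φ (Eg k (resSeq n hn f)) * φ (tauWord k N w) =
      φ (tauWord k N w) * φ (Eg k (resSeq n hn g)) := by
  induction w generalizing f with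
  | nil => rw [permTab_one_iff.1 h, tauWord_nil, map_one, mul_one, one_mul]
  | cons a w ih =>
    rw [wordProd_cons, permTab_posSwap_mul_iff] at h
    rw [tauWord_cons, map_mul, ← mul_assoc, R.e_mul_t, ← resSeq_swapEnt, mul_assoc, ih h, mul_assoc]

theorem map_tableauElt (hn : 0 < n) {w : Word N} {f g : Fin N → ℕ × ℕ}
    (h : permTab (wordProd N w) f g) :
    φ (tableauElt k hn f g w) = φ (Eg k (resSeq n hn f)) * φ (tauWord k N w) := by
  rw [tableauElt, map_mul, map_mul, R.map_e_mul_tauWord hn h, mul_assoc, R.e_mul_e]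

end IdempotentRels

namespace TableauRels

variable {hn : 0 < n} (R : TableauRels l hn φ)
include R

theorem exists_isSYT_of_ne_zero (hdec : l.Pairwise (· > ·)) (hle : ∀ x ∈ l, x ≤ n)
    {f : Fin N → ℕ × ℕ} (hf : IsSYT l N f) {w : Word N}
    (hne : φ (Eg k (resSeq n hn f)) * φ (tauWord k N w) ≠ 0) :
    ∃ g, IsSYT l N g ∧ permTab (wordProd N w) f g := by
  induction w generalizing f with
  | nil => exact ⟨f, hf, permTab_one_iff.2 rfl⟩
  | cons a w ih =>
    rw [tauWord_cons, map_mul, ← mul_assoc, R.e_mul_t, ← resSeq_swapEnt] at hne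
    have hsw : IsSYT l N (swapEnt a.1 a.2 f) := by
      refine (hf.isSYT_swapEnt_iff_lettersCommute hdec hn hle a.2).2 (of_not_not fun hcomm => ?_)
      refine left_ne_zero_of_mul hne (R.t_mul_e_eq_zero _ _ _ fun hcomm' => hcomm ?_)
      rw [resSeq_swapEnt, swapSeq_left, swapSeq_right] at hcomm'
      exact hcomm'.symm
    rw [mul_assoc] at hne
    obtain ⟨g, hg, hfg⟩ := ih hsw (right_ne_zero_of_mul hne)
    exact ⟨g, hg, (permTab_posSwap_mul_iff a.2).2 hfg⟩

omit R in
theorem map_e_mul_tauWord_mem {f : Fin N → ℕ × ℕ} (hf : IsSYT l N f) (w : Word N) :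
    φ (Eg k (resSeq n hn f)) * φ (tauWord k N w) ∈ standardWordSpan l hn φ :=
  Submodule.subset_span ⟨f, w, hf, rfl⟩

theorem map_e_mul_tauWord_mul_gen_mem {f : Fin N → ℕ × ℕ} (hf : IsSYT l N f) (w : Word N)
    (i : Gen n N) :
    φ (Eg k (resSeq n hn f)) * φ (tauWord k N w) * φ (FreeAlgebra.ι k i) ∈
      standardWordSpan l hn φ := by
  cases i with
  | x p =>
    have hx : φ (FreeAlgebra.ι k (Gen.x p)) = 0 := R.x_eq_zero p
    rw [hx, mul_zero]
    exact Submodule.zero_mem _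
  | t j h =>
    have htau : φ (tauWord k N (w ++ [⟨j, h⟩])) =
        φ (tauWord k N w) * φ (FreeAlgebra.ι k (Gen.t j h)) := by
      rw [tauWord_append_singleton, map_mul, Tg]
    rw [mul_assoc, ← htau]
    exact map_e_mul_tauWord_mem hf _
  | e ν =>
    let g : Fin N → ℕ × ℕ := fun q => f (wordProd N w q.rev).rev
    have hfg : permTab (wordProd N w) f g := fun _ => rfl
    by_cases hν : resSeq n hn g = ν
    · have he : φ (tauWord k N w) * φ (Eg k (resSeq n hn g)) * φ (FreeAlgebra.ι k (Gen.e ν)) =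
          φ (tauWord k N w) * φ (Eg k (resSeq n hn g)) := by
        rw [mul_assoc, ← hν]
        exact congrArg _ (R.e_mul_e _)
      rw [R.map_e_mul_tauWord hn hfg, he, ← R.map_e_mul_tauWord hn hfg]
      exact map_e_mul_tauWord_mem hf w
    · have he : φ (Eg k (resSeq n hn g)) * φ (FreeAlgebra.ι k (Gen.e ν)) = 0 :=
        R.e_mul_e_of_ne _ _ hν
      rw [R.map_e_mul_tauWord hn hfg, mul_assoc, he, mul_zero]
      exact Submodule.zero_mem _

theorem mul_mem_standardWordSpan (a : FA k n N) {x : A} (hx : x ∈ standardWordSpan l hn φ) :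
    x * φ a ∈ standardWordSpan l hn φ := by
  induction a using FreeAlgebra.induction generalizing x with
  | grade0 r =>
    rw [AlgHom.commutes, ← Algebra.commutes, ← Algebra.smul_def]
    exact Submodule.smul_mem _ r hx
  | grade1 i =>
    suffices h : standardWordSpan l hn φ ≤
        (standardWordSpan l hn φ).comap (LinearMap.mulRight k (φ (FreeAlgebra.ι k i))) from h hx
    refine Submodule.span_le.2 ?_
    rintro _ ⟨f, w, hf, rfl⟩
    exact R.map_e_mul_tauWord_mul_gen_mem hf w i
  | add a b ha hb => rw [map_add, mul_add]; exact Submodule.add_mem _ (ha hx) (hb hx)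
  | mul a b ha hb => rw [map_mul, ← mul_assoc]; exact hb (ha hx)

theorem one_mem_standardWordSpan : (1 : A) ∈ standardWordSpan l hn φ := by
  rw [← R.sum_e]
  refine Submodule.sum_mem _ fun ν _ => ?_
  by_cases hν : ∃ f, IsSYT l N f ∧ resSeq n hn f = ν
  · obtain ⟨f, hf, rfl⟩ := hν
    simpa [tauWord_nil] using map_e_mul_tauWord_mem (φ := φ) (hn := hn) hf []
  · rw [R.e_eq_zero ν hν]
    exact Submodule.zero_mem _

theorem standardWordSpan_eq_top (hφ : Function.Surjective φ) : standardWordSpan l hn φ = ⊤ := by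
  refine Submodule.eq_top_iff'.2 fun y => ?_
  obtain ⟨a, rfl⟩ := hφ y
  simpa using R.mul_mem_standardWordSpan a R.one_mem_standardWordSpan

end TableauRels

end TableauElements

section WordIndependence

variable {k : Type} [Field k] {A : Type} [Ring A] [Algebra k A] {n N : ℕ} {l : List ℕ}
  {φ : FA k n N →ₐ[k] A}

theorem natSwap_eq_extendDomain {j : ℕ} (h : j + 1 < N) :
    natSwap j = (posSwap j h).extendDomain Fin.equivSubtype := by
  ext i
  by_cases hi : i < N
  · rw [Equiv.Perm.extendDomain_apply_subtype _ Fin.equivSubtype hi, natSwap_apply]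
    exact (val_posSwap j h ⟨i, hi⟩).symm
  · rw [Equiv.Perm.extendDomain_apply_not_subtype _ Fin.equivSubtype hi, natSwap_apply,
      if_neg (by omega), if_neg (by omega)]

theorem prod_map_natSwap (w : Word N) :
    ((w.map Subtype.val).map natSwap).prod =
      (wordProd N w).extendDomain Fin.equivSubtype := by
  induction w with
  | nil => exact (Equiv.Perm.extendDomain_one _).symm
  | cons a w ih =>
    rw [List.map_cons, List.map_cons, List.prod_cons, ih, natSwap_eq_extendDomain a.2,
      Equiv.Perm.extendDomain_mul, wordProd_cons]

theorem wordProd_eq_iff {w w' : Word N} :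
    wordProd N w = wordProd N w' ↔
      ((w.map Subtype.val).map natSwap).prod = ((w'.map Subtype.val).map natSwap).prod := by
  rw [prod_map_natSwap, prod_map_natSwap]
  exact (Equiv.Perm.extendDomainHom_injective Fin.equivSubtype).eq_iff.symm

/-- The family of the images of the `τ_j`, extended by zero to all `j : ℕ`. -/
noncomputable def natIntertwiner (φ : FA k n N →ₐ[k] A) (j : ℕ) : A :=
  if h : j + 1 < N then φ (Tg k j h) else 0

theorem natIntertwiner_of_lt {j : ℕ} (h : j + 1 < N) :
    natIntertwiner φ j = φ (Tg k j h) :=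
  dif_pos h

theorem natIntertwiner_of_not_lt {j : ℕ} (h : ¬j + 1 < N) : natIntertwiner φ j = 0 :=
  dif_neg h

theorem prod_map_natIntertwiner (w : Word N) :
    ((w.map Subtype.val).map (natIntertwiner φ)).prod = φ (tauWord k N w) := by
  rw [tauWord, map_list_prod, List.map_map, List.map_map]
  exact congrArg List.prod (List.map_congr_left fun a _ => natIntertwiner_of_lt a.2)

namespace TableauRels

variable {hn : 0 < n} (R : TableauRels l hn φ)
include R

theorem isBraidFamily_natIntertwiner : IsBraidFamily (natIntertwiner φ) where
  commute {i j} hij := by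
    by_cases hj : j + 1 < N
    · rw [natIntertwiner_of_lt hj, natIntertwiner_of_lt (by omega : i + 1 < N)]
      exact R.t_mul_t _ _ _ _ (Or.inl hij)
    · rw [natIntertwiner_of_not_lt hj]
      exact Commute.zero_right _
  braid j := by
    by_cases hj : j + 2 < N
    · rw [natIntertwiner_of_lt hj, natIntertwiner_of_lt (by omega : j + 1 < N)]
      exact R.braid j _ hj
    · simp only [natIntertwiner_of_not_lt hj, mul_zero, zero_mul]

theorem isPartialInvolutionFamily_natIntertwiner :
    IsPartialInvolutionFamily (natIntertwiner φ) (fun ν => φ (Eg k ν)) where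
  toIsBraidFamily := R.isBraidFamily_natIntertwiner
  exchange ν j := by
    by_cases hj : j + 1 < N
    · exact ⟨swapSeq j hj ν, by rw [natIntertwiner_of_lt hj, R.e_mul_t]⟩
    · exact ⟨ν, by rw [natIntertwiner_of_not_lt hj, mul_zero, zero_mul]⟩
  mul_sq ν j := by
    by_cases hj : j + 1 < N
    · have hcomm : φ (Eg k ν) * (φ (Tg k j hj) * φ (Tg k j hj)) =
          φ (Tg k j hj) * φ (Tg k j hj) * φ (Eg k ν) := by
        rw [← mul_assoc, R.e_mul_t, mul_assoc, ← R.t_mul_e, mul_assoc]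
      rw [natIntertwiner_of_lt hj, hcomm]
      by_cases hν : LettersCommute (ν ⟨j, by omega⟩) (ν ⟨j + 1, hj⟩)
      · exact Or.inr (R.t_mul_t_mul_e j hj ν hν)
      · rw [mul_assoc, R.t_mul_e_eq_zero j hj ν hν, mul_zero]
        exact Or.inl rfl
    · rw [natIntertwiner_of_not_lt hj, mul_zero, mul_zero]
      exact Or.inl rfl

theorem map_e_mul_tauWord_eq {ν : Fin N → Fin n} {w w' : Word N}
    (hww' : wordProd N w = wordProd N w') (h : φ (Eg k ν) * φ (tauWord k N w) ≠ 0)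
    (h' : φ (Eg k ν) * φ (tauWord k N w') ≠ 0) :
    φ (Eg k ν) * φ (tauWord k N w) = φ (Eg k ν) * φ (tauWord k N w') := by
  have hlt : ∀ w : Word N, ∀ j ∈ w.map Subtype.val, j + 1 < N := fun w j hj => by
    obtain ⟨a, -, rfl⟩ := List.mem_map.1 hj
    exact a.2
  rw [← prod_map_natIntertwiner] at h h' ⊢
  rw [← prod_map_natIntertwiner]
  exact R.isPartialInvolutionFamily_natIntertwiner.mul_prod_eq_of_ne_zero (hlt w) (hlt w')
    (wordProd_eq_iff.1 hww') h h'

theorem map_tableauElt_eq {f g : Fin N → ℕ × ℕ} {w w' : Word N}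
    (hfg : permTab (wordProd N w) f g) (hww' : wordProd N w = wordProd N w')
    (h : φ (tableauElt k hn f g w) ≠ 0) (h' : φ (tableauElt k hn f g w') ≠ 0) :
    φ (tableauElt k hn f g w) = φ (tableauElt k hn f g w') := by
  rw [R.map_tableauElt hn hfg] at h ⊢
  rw [R.map_tableauElt hn (hww' ▸ hfg)] at h' ⊢
  exact R.map_e_mul_tauWord_eq hww' h h'

theorem span_map_tableauElt_eq_top (hdec : l.Pairwise (· > ·)) (hle : ∀ x ∈ l, x ≤ n)
    (hφ : Function.Surjective φ)
    {w : {f // IsSYT l N f} × {f // IsSYT l N f} → Word N}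
    (hw : ∀ p, permTab (wordProd N (w p)) p.1.val p.2.val)
    (hne : ∀ p, φ (tableauElt k hn p.1.val p.2.val (w p)) ≠ 0) :
    Submodule.span k (Set.range fun p => φ (tableauElt k hn p.1.val p.2.val (w p))) = ⊤ := by
  rw [eq_top_iff, ← R.standardWordSpan_eq_top hφ]
  refine Submodule.span_le.2 ?_
  rintro _ ⟨f, v, hf, rfl⟩
  by_cases hv : φ (Eg k (resSeq n hn f)) * φ (tauWord k N v) = 0
  · rw [hv]
    exact Submodule.zero_mem _
  · obtain ⟨g, hg, hfg⟩ := R.exists_isSYT_of_ne_zero hdec hle hf hv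
    let p : {f // IsSYT l N f} × {f // IsSYT l N f} := (⟨f, hf⟩, ⟨g, hg⟩)
    rw [← R.map_tableauElt hn hfg] at hv ⊢
    rw [R.map_tableauElt_eq hfg (permTab_injective hf.1 hfg (hw p)) hv (hne p)]
    exact Submodule.subset_span ⟨p, rfl⟩

end TableauRels

end WordIndependence

section Representation

variable {k : Type} [Field k] {n N : ℕ} {l : List ℕ} {hn : 0 < n}

theorem IsReducedWord.cons {a : {j : ℕ // j + 1 < N}} {w : Word N}
    (hw : IsReducedWord N (wordProd N w) w) (ha : ¬IsDescent (wordProd N w) a.1 a.2) :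
    IsReducedWord N (wordProd N (a :: w)) (a :: w) :=
  isReducedWord_cons_iff.2 ⟨hw, isDescent_posSwap_mul_iff.2 ha⟩

theorem isReducedWord_pair {a b : {j : ℕ // j + 1 < N}} (hab : (a : ℕ) ≠ b) :
    IsReducedWord N (wordProd N [a, b]) [a, b] := by
  refine IsReducedWord.cons (IsReducedWord.cons isReducedWord_nil ?_) ?_
  · simp [IsDescent, wordProd]
  · simp only [IsDescent, wordProd, List.map_cons, List.map_nil, List.prod_cons, List.prod_nil,
      mul_one, posSwap_inv, Fin.lt_def, val_posSwap]
    split_ifs <;> omega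

theorem isReducedWord_triple {a b : {j : ℕ // j + 1 < N}}
    (hab : (a : ℕ) + 1 = b ∨ (b : ℕ) + 1 = a) :
    IsReducedWord N (wordProd N [a, b, a]) [a, b, a] := by
  refine (isReducedWord_pair (by omega)).cons ?_
  simp only [IsDescent, wordProd, List.map_cons, List.map_nil, List.prod_cons, List.prod_nil,
    mul_one, mul_inv_rev, posSwap_inv, Equiv.Perm.mul_apply, Fin.lt_def, val_posSwap]
  split_ifs <;> omega

theorem wordProd_pair_comm {a b : {j : ℕ // j + 1 < N}} (hab : (a : ℕ) + 1 < b) :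
    wordProd N [a, b] = wordProd N [b, a] := by
  simpa [wordProd_eq_iff] using (isBraidFamily_natSwap.commute hab).eq

theorem wordProd_braid {j : ℕ} (h1 : j + 1 < N) (h2 : j + 2 < N) :
    wordProd N [⟨j + 1, h2⟩, ⟨j, h1⟩, ⟨j + 1, h2⟩] =
      wordProd N [⟨j, h1⟩, ⟨j + 1, h2⟩, ⟨j, h1⟩] := by
  simpa [wordProd_eq_iff, mul_assoc] using isBraidFamily_natSwap.braid j

/-- The action of the free algebra on the span of the standard tableaux, in which `e(ν)` projects
onto the tableaux of residue sequence `ν`, every `x_p` acts by zero and `τ_j` exchanges two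
consecutive entries. -/
noncomputable def tableauRep (k : Type) [Field k] {n : ℕ} (hn : 0 < n) (l : List ℕ) (N : ℕ) :
    FA k n N →ₐ[k] Module.End k (TabV k (IsSYT l N)) :=
  FreeAlgebra.lift k fun
    | Gen.e ν => eOpTab k n hn (IsSYT l N) ν
    | Gen.x _ => 0
    | Gen.t j h => tOpTab k (IsSYT l N) j h

theorem tableauRep_x (p : Fin N) : tableauRep k hn l N (Xg k p) = 0 :=
  FreeAlgebra.lift_ι_apply _ _

theorem tableauRep_e_apply (ν : Fin N → Fin n) (u : TabV k (IsSYT l N)) (U : {f // IsSYT l N f}) :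
    tableauRep k hn l N (Eg k ν) u U = if resSeq n hn U.val = ν then u U else 0 := by
  simp only [tableauRep, Eg, FreeAlgebra.lift_ι_apply, eOpTab, LinearMap.pi_apply]
  split_ifs <;> rfl

theorem extend_apply_of_not_isSYT (u : TabV k (IsSYT l N)) {f : Fin N → ℕ × ℕ}
    (hf : ¬IsSYT l N f) : Function.extend Subtype.val u (0 : (Fin N → ℕ × ℕ) → k) f = 0 :=
  Function.extend_apply' _ _ _ fun ⟨V, hV⟩ => hf (hV ▸ V.2)

theorem tableauRep_t_apply {j : ℕ} (h : j + 1 < N) (u : TabV k (IsSYT l N))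
    (U : {f // IsSYT l N f}) :
    tableauRep k hn l N (Tg k j h) u U =
      Function.extend Subtype.val u (0 : (Fin N → ℕ × ℕ) → k) (swapEnt j h U.val) := by
  simp only [tableauRep, Tg, FreeAlgebra.lift_ι_apply, tOpTab, LinearMap.pi_apply]
  split_ifs with hs
  · exact (Subtype.val_injective.extend_apply u 0 ⟨_, hs⟩).symm
  · exact (extend_apply_of_not_isSYT u hs).symm

theorem tableauRep_t_apply_of_isSYT {j : ℕ} (h : j + 1 < N) (u : TabV k (IsSYT l N))
    {U : {f // IsSYT l N f}} (hU : IsSYT l N (swapEnt j h U.val)) :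
    tableauRep k hn l N (Tg k j h) u U = u ⟨swapEnt j h U.val, hU⟩ := by
  rw [tableauRep_t_apply]
  exact Subtype.val_injective.extend_apply u 0 ⟨_, hU⟩

theorem tableauRep_t_apply_of_not_isSYT {j : ℕ} (h : j + 1 < N) (u : TabV k (IsSYT l N))
    {U : {f // IsSYT l N f}} (hU : ¬IsSYT l N (swapEnt j h U.val)) :
    tableauRep k hn l N (Tg k j h) u U = 0 := by
  rw [tableauRep_t_apply, extend_apply_of_not_isSYT u hU]

theorem tableauRep_t_t_apply (hdec : l.Pairwise (· > ·)) (hle : ∀ x ∈ l, x ≤ n) {j : ℕ}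
    (h : j + 1 < N) (u : TabV k (IsSYT l N)) (U : {f // IsSYT l N f}) :
    tableauRep k hn l N (Tg k j h) (tableauRep k hn l N (Tg k j h) u) U =
      if LettersCommute (resSeq n hn U.val ⟨j, by omega⟩) (resSeq n hn U.val ⟨j + 1, h⟩) then u U
      else 0 := by
  rw [← U.2.isSYT_swapEnt_iff_lettersCommute hdec hn hle h]
  split_ifs with hU
  · have hU' : IsSYT l N (swapEnt j h (swapEnt j h U.val)) := by rw [swapEnt_swapEnt]; exact U.2
    rw [tableauRep_t_apply_of_isSYT h _ hU, tableauRep_t_apply_of_isSYT h _ hU']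
    exact congrArg u (Subtype.ext (swapEnt_swapEnt U.val h))
  · exact tableauRep_t_apply_of_not_isSYT h _ hU

theorem tableauRep_tauWord_apply (hdec : l.Pairwise (· > ·)) {w : Word N}
    (hw : IsReducedWord N (wordProd N w) w) (u : TabV k (IsSYT l N)) {U : {f // IsSYT l N f}}
    {g : Fin N → ℕ × ℕ} (h : permTab (wordProd N w) U.val g) :
    tableauRep k hn l N (tauWord k N w) u U =
      Function.extend Subtype.val u (0 : (Fin N → ℕ × ℕ) → k) g := by
  induction w generalizing U with
  | nil =>
    rw [← permTab_one_iff.1 h, tauWord_nil, map_one, Module.End.one_apply,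
      Subtype.val_injective.extend_apply]
  | cons a w ih =>
    obtain ⟨hw, ha⟩ := isReducedWord_cons_iff.1 hw
    rw [tauWord_cons, map_mul, Module.End.mul_apply]
    by_cases hs : IsSYT l N (swapEnt a.1 a.2 U.val)
    · rw [tableauRep_t_apply_of_isSYT a.2 _ hs]
      exact ih hw ((permTab_posSwap_mul_iff a.2).1 h)
    · rw [tableauRep_t_apply_of_not_isSYT a.2 _ hs, extend_apply_of_not_isSYT]
      exact fun hg => hs (U.2.isSYT_swapEnt_of_isDescent hdec hg h ha)

theorem tableauRep_tauWord_eq (hdec : l.Pairwise (· > ·)) {w w' : Word N}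
    (hw : IsReducedWord N (wordProd N w) w) (hw' : IsReducedWord N (wordProd N w') w')
    (hww' : wordProd N w = wordProd N w') :
    tableauRep k hn l N (tauWord k N w) = tableauRep k hn l N (tauWord k N w') := by
  refine LinearMap.ext fun u => funext fun U => ?_
  obtain ⟨g, h⟩ : ∃ g, permTab (wordProd N w) U.val g := ⟨_, fun _ => rfl⟩
  rw [tableauRep_tauWord_apply hdec hw u h, tableauRep_tauWord_apply hdec hw' u (hww' ▸ h)]

theorem tableauRep_t_mul_e {j : ℕ} (h : j + 1 < N) (ν : Fin N → Fin n) :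
    tableauRep k hn l N (Tg k j h) * tableauRep k hn l N (Eg k ν) =
      tableauRep k hn l N (Eg k (swapSeq j h ν)) * tableauRep k hn l N (Tg k j h) := by
  refine LinearMap.ext fun u => funext fun U => ?_
  rw [Module.End.mul_apply, Module.End.mul_apply, tableauRep_e_apply]
  by_cases hU : IsSYT l N (swapEnt j h U.val)
  · rw [tableauRep_t_apply_of_isSYT h _ hU, tableauRep_t_apply_of_isSYT h _ hU, tableauRep_e_apply,
      resSeq_swapEnt]
    simp only [(swapSeq_involutive h).eq_iff]
  · rw [tableauRep_t_apply_of_not_isSYT h _ hU, tableauRep_t_apply_of_not_isSYT h _ hU, ite_self]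

theorem idempotentRels_tableauRep (hdec : l.Pairwise (· > ·)) :
    IdempotentRels (fun ν => tableauRep k hn l N (Eg k ν))
      (fun j h => tableauRep k hn l N (Tg k j h)) where
  e_mul_e_of_ne ν ν' hne := by
    refine LinearMap.ext fun u => funext fun U => ?_
    rw [Module.End.mul_apply, tableauRep_e_apply, tableauRep_e_apply]
    split_ifs with h h'
    exacts [absurd (h.symm.trans h') hne, rfl, rfl]
  e_mul_e ν := by
    refine LinearMap.ext fun u => funext fun U => ?_
    rw [Module.End.mul_apply, tableauRep_e_apply, tableauRep_e_apply]
    split_ifs <;> rfl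
  sum_e := by
    refine LinearMap.ext fun u => funext fun U => ?_
    simp [LinearMap.sum_apply, Finset.sum_apply, tableauRep_e_apply]
  t_mul_e j h ν := tableauRep_t_mul_e h ν
  t_mul_t a ha b hb hab := by
    have comm : ∀ {a b : {j : ℕ // j + 1 < N}}, (a : ℕ) + 1 < b →
        tableauRep k hn l N (Tg k a.1 a.2) * tableauRep k hn l N (Tg k b.1 b.2) =
          tableauRep k hn l N (Tg k b.1 b.2) * tableauRep k hn l N (Tg k a.1 a.2) := by
      intro a b hab
      simpa [tauWord] using tableauRep_tauWord_eq (k := k) (hn := hn) hdec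
        (isReducedWord_pair (by omega)) (isReducedWord_pair (by omega)) (wordProd_pair_comm hab)
    obtain hab | hab := hab
    · exact comm (a := ⟨a, ha⟩) (b := ⟨b, hb⟩) hab
    · exact (comm (a := ⟨b, hb⟩) (b := ⟨a, ha⟩) hab).symm

theorem tableauRels_tableauRep (hdec : l.Pairwise (· > ·)) (hle : ∀ x ∈ l, x ≤ n) :
    TableauRels l hn (tableauRep k hn l N) where
  toIdempotentRels := idempotentRels_tableauRep hdec
  x_eq_zero := tableauRep_x
  e_eq_zero ν hν := by
    refine LinearMap.ext fun u => funext fun U => ?_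
    rw [tableauRep_e_apply, if_neg fun hU => hν ⟨U.val, U.2, hU⟩]
    rfl
  t_mul_t_mul_e j h ν hcomm := by
    refine LinearMap.ext fun u => funext fun U => ?_
    rw [Module.End.mul_apply, Module.End.mul_apply, tableauRep_t_t_apply hdec hle,
      tableauRep_e_apply]
    split_ifs with hc hU hU
    exacts [rfl, rfl, absurd (hU ▸ hcomm) hc, rfl]
  t_mul_e_eq_zero j h ν hcomm := by
    refine LinearMap.ext fun u => funext fun U => ?_
    rw [tableauRep_t_mul_e, Module.End.mul_apply, tableauRep_e_apply]
    split_ifs with hU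
    · refine tableauRep_t_apply_of_not_isSYT h _ fun hs => hcomm ?_
      rw [U.2.isSYT_swapEnt_iff_lettersCommute hdec hn hle h, hU, swapSeq_left, swapSeq_right] at hs
      exact hs.symm
    · rfl
  braid j h1 h2 := by
    simpa [tauWord, mul_assoc] using tableauRep_tauWord_eq (k := k) (hn := hn) hdec
      (isReducedWord_triple (by simp)) (isReducedWord_triple (by simp)) (wordProd_braid h1 h2)

theorem tableauRep_tableauElt_apply (hdec : l.Pairwise (· > ·)) (hle : ∀ x ∈ l, x ≤ n)
    {w : Word N} (hw : IsReducedWord N (wordProd N w) w) {T S : {f // IsSYT l N f}}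
    (h : permTab (wordProd N w) T.val S.val) (u : TabV k (IsSYT l N)) (U : {f // IsSYT l N f}) :
    tableauRep k hn l N (tableauElt k hn T.val S.val w) u U = if U = T then u S else 0 := by
  rw [(idempotentRels_tableauRep hdec).map_tableauElt hn h, Module.End.mul_apply,
    tableauRep_e_apply]
  by_cases hU : U = T
  · rw [hU, if_pos rfl, if_pos rfl, tableauRep_tauWord_apply hdec hw u h,
      Subtype.val_injective.extend_apply]
  · rw [if_neg hU, if_neg]
    exact fun hres => hU (Subtype.ext (U.2.eq_of_resSeq_eq hdec hn hle T.2 hres))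

theorem linearIndependent_tableauRep_tableauElt (hdec : l.Pairwise (· > ·)) (hle : ∀ x ∈ l, x ≤ n)
    {w : {f // IsSYT l N f} × {f // IsSYT l N f} → Word N}
    (hw : ∀ p, permTab (wordProd N (w p)) p.1.val p.2.val ∧
      IsReducedWord N (wordProd N (w p)) (w p)) :
    LinearIndependent k fun p =>
      tableauRep k hn l N (tableauElt k hn p.1.val p.2.val (w p)) := by
  have hentry : ∀ p q : {f // IsSYT l N f} × {f // IsSYT l N f},
      tableauRep k hn l N (tableauElt k hn p.1.val p.2.val (w p)) (Pi.single q.2 1) q.1 =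
        if p = q then 1 else 0 := fun p q => by
    rw [tableauRep_tableauElt_apply hdec hle (hw p).2 (hw p).1, Pi.single_apply, ← ite_and]
    exact if_congr (by rw [Prod.ext_iff, eq_comm]) rfl rfl
  rw [linearIndependent_iff']
  intro s c hc q hq
  have hq_entry := congrFun (LinearMap.congr_fun hc (Pi.single q.2 1)) q.1
  simpa [LinearMap.sum_apply, hentry, hq] using hq_entry

end Representation

section Basis

variable {k : Type} [Field k] {n N : ℕ} {l : List ℕ} {hn : 0 < n}
  {Q : Fin n → Fin n → MvPolynomial (Fin 2) k}

/-- The projection of the free algebra onto `R^{Λ₁}(ξ)`, where `ξ` is the weight of the shifted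
shape `l`. -/
noncomputable abbrev shapeMk (Q : Fin n → Fin n → MvPolynomial (Fin 2) k) (l : List ℕ)
    (hn : 0 < n) (N : ℕ) : FA k n N →ₐ[k] RingQuot (ShapeRel Q l hn N) :=
  RingQuot.mkAlgHom k (ShapeRel Q l hn N)

theorem tableauRels_shapeMk (hQ : QAdmissible k (AB n) (dB n) Q) (hdec : l.Pairwise (· > ·))
    (hle : ∀ x ∈ l, x ≤ n) : TableauRels l hn (shapeMk Q l hn N) :=
  tableauRels_of_map_eq hQ hdec hn hle fun _ _ => RingQuot.mkAlgHom_rel k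

theorem exists_algHom_comp_shapeMk (hQ : QAdmissible k (AB n) (dB n) Q)
    (hdec : l.Pairwise (· > ·)) (hle : ∀ x ∈ l, x ≤ n) :
    ∃ ψ : RingQuot (ShapeRel Q l hn N) →ₐ[k] Module.End k (TabV k (IsSYT l N)),
      ψ.comp (shapeMk Q l hn N) = tableauRep k hn l N :=
  ⟨RingQuot.liftAlgHom k ⟨tableauRep k hn l N, fun _ _ =>
      (tableauRels_tableauRep hdec hle).map_eq_of_shapeRel hQ hdec hle⟩,
    AlgHom.ext fun a => RingQuot.liftAlgHom_mkAlgHom_apply k _ _ a⟩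

theorem linearIndependent_shapeMk_tableauElt (hQ : QAdmissible k (AB n) (dB n) Q)
    (hdec : l.Pairwise (· > ·)) (hle : ∀ x ∈ l, x ≤ n)
    {w : {f // IsSYT l N f} × {f // IsSYT l N f} → Word N}
    (hw : ∀ p, permTab (wordProd N (w p)) p.1.val p.2.val ∧
      IsReducedWord N (wordProd N (w p)) (w p)) :
    LinearIndependent k fun p =>
      shapeMk Q l hn N (tableauElt k hn p.1.val p.2.val (w p)) := by
  obtain ⟨ψ, hψ⟩ := exists_algHom_comp_shapeMk (hn := hn) (N := N) hQ hdec hle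
  refine LinearIndependent.of_comp ψ.toLinearMap ?_
  have := linearIndependent_tableauRep_tableauElt (k := k) (hn := hn) hdec hle hw
  rwa [← hψ] at this

theorem shapeMk_tableauElt_ne_zero (hQ : QAdmissible k (AB n) (dB n) Q)
    (hdec : l.Pairwise (· > ·)) (hle : ∀ x ∈ l, x ≤ n) {T S : {f // IsSYT l N f}} {w : Word N}
    (h : permTab (wordProd N w) T.val S.val) (hw : IsReducedWord N (wordProd N w) w) :
    shapeMk Q l hn N (tableauElt k hn T.val S.val w) ≠ 0 := by
  obtain ⟨ψ, hψ⟩ := exists_algHom_comp_shapeMk (hn := hn) (N := N) hQ hdec hle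
  intro hzero
  have hrep : tableauRep k hn l N (tableauElt k hn T.val S.val w) = 0 := by
    rw [← hψ, AlgHom.comp_apply, hzero, map_zero]
  have := tableauRep_tableauElt_apply (k := k) (hn := hn) hdec hle hw h 1 T
  simp [hrep] at this

theorem shapeMk_tableauElt_eq (hQ : QAdmissible k (AB n) (dB n) Q)
    (hdec : l.Pairwise (· > ·)) (hle : ∀ x ∈ l, x ≤ n) {T S : {f // IsSYT l N f}}
    {σ : Equiv.Perm (Fin N)} (h : permTab σ T.val S.val) {w w' : Word N}
    (hw : IsReducedWord N σ w) (hw' : IsReducedWord N σ w') :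
    shapeMk Q l hn N (tableauElt k hn T.val S.val w) =
      shapeMk Q l hn N (tableauElt k hn T.val S.val w') := by
  obtain ⟨rfl, hlen⟩ := hw
  refine (tableauRels_shapeMk hQ hdec hle).map_tableauElt_eq h hw'.1.symm
    (shapeMk_tableauElt_ne_zero hQ hdec hle h ⟨rfl, hlen⟩)
    (shapeMk_tableauElt_ne_zero hQ hdec hle ?_ ?_) <;> rwa [hw'.1]

theorem span_shapeMk_tableauElt_eq_top (hQ : QAdmissible k (AB n) (dB n) Q)
    (hdec : l.Pairwise (· > ·)) (hle : ∀ x ∈ l, x ≤ n)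
    {w : {f // IsSYT l N f} × {f // IsSYT l N f} → Word N}
    (hw : ∀ p, permTab (wordProd N (w p)) p.1.val p.2.val ∧
      IsReducedWord N (wordProd N (w p)) (w p)) :
    Submodule.span k (Set.range fun p =>
      shapeMk Q l hn N (tableauElt k hn p.1.val p.2.val (w p))) = ⊤ :=
  (tableauRels_shapeMk hQ hdec hle).span_map_tableauElt_eq_top hdec hle
    (RingQuot.mkAlgHom_surjective k _) (fun p => (hw p).1)
    fun p => shapeMk_tableauElt_ne_zero hQ hdec hle (hw p).1 (hw p).2

theorem finrank_ringQuot_shapeRel (hQ : QAdmissible k (AB n) (dB n) Q)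
    (hdec : l.Pairwise (· > ·)) (hle : ∀ x ∈ l, x ≤ n) :
    Module.finrank k (RingQuot (ShapeRel Q l hn N)) =
      Nat.card {f : Fin N → ℕ × ℕ // IsSYT l N f} *
        Nat.card {f : Fin N → ℕ × ℕ // IsSYT l N f} := by
  have hex : ∀ p : {f // IsSYT l N f} × {f // IsSYT l N f}, ∃ w : Word N,
      permTab (wordProd N w) p.1.val p.2.val ∧ IsReducedWord N (wordProd N w) w := fun p => by
    obtain ⟨σ, hσ⟩ := p.1.2.exists_permTab p.2.2
    obtain ⟨w, rfl, hlen⟩ := exists_isReducedWord σ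
    exact ⟨w, hσ, rfl, hlen⟩
  choose w hw using hex
  rw [← Nat.card_prod, Module.finrank_eq_nat_card_basis
    (Module.Basis.mk (linearIndependent_shapeMk_tableauElt hQ hdec hle hw)
      (span_shapeMk_tableauElt_eq_top hQ hdec hle hw).ge)]

end Basis

theorem basis_of_cyclotomic_QHA_B
    (k : Type) [Field k] (n : ℕ) (hn : 2 ≤ n)
    (Q : Fin n → Fin n → MvPolynomial (Fin 2) k)
    (hQ : QAdmissible k (AB n) (dB n) Q)
    (l : List ℕ) (hdec : l.Chain' (· > ·)) (hpos : ∀ x ∈ l, 0 < x)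
    (hle : ∀ x ∈ l, x ≤ n) :
    -- any two standard tableaux of shape λ_b differ by a place permutation
    (∀ T S : {f : Fin l.sum → ℕ × ℕ // IsSYT l l.sum f},
      ∃ σ : Equiv.Perm (Fin l.sum), permTab σ T.val S.val) ∧
    -- c_{T,S} = e(res T) τ_{w_{T,S}} e(res S) does not depend on the choice of
    -- reduced expression of w_{T,S}:
    (∀ T S : {f : Fin l.sum → ℕ × ℕ // IsSYT l l.sum f},
      ∀ σ : Equiv.Perm (Fin l.sum), permTab σ T.val S.val →
      ∀ w₁ w₂ : Word l.sum, IsReducedWord l.sum σ w₁ → IsReducedWord l.sum σ w₂ →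
        RingQuot.mkAlgHom k (CRel k Q
            (Iβ (AB n) (Pi.single ⟨0, by omega⟩ 1) (wtP n (by omega) l) l.sum)
            (Pi.single ⟨0, by omega⟩ 1))
          (Eg k (resSeq n (by omega) T.val) * tauWord k l.sum w₁ *
            Eg k (resSeq n (by omega) S.val)) =
        RingQuot.mkAlgHom k (CRel k Q
            (Iβ (AB n) (Pi.single ⟨0, by omega⟩ 1) (wtP n (by omega) l) l.sum)
            (Pi.single ⟨0, by omega⟩ 1))
          (Eg k (resSeq n (by omega) T.val) * tauWord k l.sum w₂ *
            Eg k (resSeq n (by omega) S.val))) ∧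
    -- the c_{T,S} form a k-basis of R^{Λ₁}(ξ):
    (∀ ch : {f : Fin l.sum → ℕ × ℕ // IsSYT l l.sum f} ×
        {f : Fin l.sum → ℕ × ℕ // IsSYT l l.sum f} → Word l.sum,
      (∀ p, permTab (wordProd l.sum (ch p)) p.1.val p.2.val ∧
        (ch p).length = permLength l.sum (wordProd l.sum (ch p))) →
      (LinearIndependent k fun p : {f : Fin l.sum → ℕ × ℕ // IsSYT l l.sum f} ×
          {f : Fin l.sum → ℕ × ℕ // IsSYT l l.sum f} =>
        RingQuot.mkAlgHom k (CRel k Q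
            (Iβ (AB n) (Pi.single ⟨0, by omega⟩ 1) (wtP n (by omega) l) l.sum)
            (Pi.single ⟨0, by omega⟩ 1))
          (Eg k (resSeq n (by omega) p.1.val) * tauWord k l.sum (ch p) *
            Eg k (resSeq n (by omega) p.2.val))) ∧
      Submodule.span k (Set.range fun p : {f : Fin l.sum → ℕ × ℕ // IsSYT l l.sum f} ×
          {f : Fin l.sum → ℕ × ℕ // IsSYT l l.sum f} =>
        RingQuot.mkAlgHom k (CRel k Q
            (Iβ (AB n) (Pi.single ⟨0, by omega⟩ 1) (wtP n (by omega) l) l.sum)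
            (Pi.single ⟨0, by omega⟩ 1))
          (Eg k (resSeq n (by omega) p.1.val) * tauWord k l.sum (ch p) *
            Eg k (resSeq n (by omega) p.2.val))) = ⊤) ∧
    -- in particular dim R^{Λ₁}(ξ) = |ST(λ_b)|²:
    Module.finrank k (RingQuot (CRel k Q
        (Iβ (AB n) (Pi.single ⟨0, by omega⟩ 1) (wtP n (by omega) l) l.sum)
        (Pi.single ⟨0, by omega⟩ 1))) =
      Nat.card {f : Fin l.sum → ℕ × ℕ // IsSYT l l.sum f} *
        Nat.card {f : Fin l.sum → ℕ × ℕ // IsSYT l l.sum f} := by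
  have hn' : 0 < n := by omega
  have hdec' : l.Pairwise (· > ·) := List.isChain_iff_pairwise.1 hdec
  refine ⟨fun T S => T.2.exists_permTab S.2,
    fun T S σ hσ w₁ w₂ hw₁ hw₂ => shapeMk_tableauElt_eq (hn := hn') hQ hdec' hle hσ hw₁ hw₂,
    fun ch hch => ?_, finrank_ringQuot_shapeRel hQ hdec' hle⟩
  have hch' := fun p => (hch p).imp_right fun hlen => (⟨rfl, hlen⟩ : IsReducedWord _ _ _)
  exact ⟨linearIndependent_shapeMk_tableauElt (hn := hn') hQ hdec' hle hch',
    span_shapeMk_tableauElt_eq_top (hn := hn') hQ hdec' hle hch'⟩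

end QHA
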